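/- arXiv:2002.07735 — 2 statements merged into one kernel-verified Lean document; each statement's English description precedes it below -/
import Mathlib

section
/- For each κ ≥ 20 and integer ℓ₀ ≥ C(κ) there exist K = K(κ,ℓ₀) ≥ 100 and constants c₁ = c₁(κ,ℓ₀), c₂ = c₂(κ,ℓ₀) ∈ (0,1) such that for all integers L₀ ≥ C'(κ,ℓ₀): if the families F and H_n (n ≥ 1) satisfy (C1) and (C2) together with P[complement of F_{0,x}] ≤ c₁ for every x ∈ 𝕃₀ and P[complement of H_{n,x}] ≤ c₂·2^{−2^n} for every n ≥ 1 and x ∈ 𝕃_n, then P[𝒢_n⁰] ≥ 1 − 2^{−2^n} for every n ≥ 0, for either notion (i) or (ii) of admissibility in the definition of 𝒢_n⁰. -/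
open MeasureTheory ProbabilityTheory Filter Set

namespace GFFperc

noncomputable section

/-- The lattice `ℤ^d`. -/
abbrev V (d : ℕ) := Fin d → ℤ

/-- Nearest-neighbour adjacency on `ℤ^d`. -/
def adj {d : ℕ} (x y : V d) : Prop := (∑ i, (x i - y i).natAbs) = 1

/-- `ℓ∞` distance between two points. -/
def dinf {d : ℕ} (x y : V d) : ℕ := Finset.univ.sup fun i => (x i - y i).natAbs

/-- `A` and `B` are joined by a nearest-neighbour path contained in `S`. -/
def ConnIn {d : ℕ} (S A B : Set (V d)) : Prop :=
  ∃ (n : ℕ) (γ : ℕ → V d), γ 0 ∈ A ∧ γ n ∈ B ∧ (∀ k, k ≤ n → γ k ∈ S) ∧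
    ∀ k, k < n → adj (γ k) (γ (k + 1))

/-- A set is connected: any two of its points are joined inside it. -/
def IsConnSet {d : ℕ} (S : Set (V d)) : Prop := ∀ x ∈ S, ∀ y ∈ S, ConnIn S {x} {y}

/-- The connected component of `x` in `S`. -/
def comp {d : ℕ} (S : Set (V d)) (x : V d) : Set (V d) := {y | ConnIn S {x} {y}}

/-- Box of (real) radius `r` centered at `x`. -/
def boxAt {d : ℕ} (x : V d) (r : ℝ) : Set (V d) := {y | ∀ i, |(y i : ℝ) - (x i : ℝ)| ≤ r}

def box (d : ℕ) (r : ℝ) : Set (V d) := boxAt (0 : V d) r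

/-- Inner vertex boundary of the box of radius `r` centered at `x`. -/
def bdryAt {d : ℕ} (x : V d) (r : ℝ) : Set (V d) :=
  {y | y ∈ boxAt x r ∧ ∃ z, z ∉ boxAt x r ∧ adj y z}

def bdry (d : ℕ) (r : ℝ) : Set (V d) := bdryAt (0 : V d) r

/-- `A` is connected to infinity within `S`. -/
def ConnToInf {d : ℕ} (S A : Set (V d)) : Prop := ∀ R : ℕ, 1 ≤ R → ConnIn S A (bdry d R)

/-- The `ℓ∞`-diameter of `S` is at least `r`. -/
def diamGE {d : ℕ} (S : Set (V d)) (r : ℝ) : Prop := ∃ x ∈ S, ∃ y ∈ S, r ≤ (dinf x y : ℝ)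

def unitV (d : ℕ) (i : Fin d) : V d := fun j => if j = i then 1 else 0

/-- `k`-step transition probabilities of simple random walk on `ℤ^d`. -/
def srwP (d : ℕ) : ℕ → V d → V d → ℝ
  | 0, x, y => if x = y then 1 else 0
  | (k + 1), x, y =>
      (1 / (2 * d)) * ∑ i : Fin d, (srwP d k (x + unitV d i) y + srwP d k (x - unitV d i) y)

/-- Green function of simple random walk on `ℤ^d`. -/
def green (d : ℕ) (x y : V d) : ℝ := ∑' k : ℕ, srwP d k x y

/-- `ℓ`-step transition kernel of the lazy simple random walk on `ℤ^d`. -/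
def lazyP (d : ℕ) : ℕ → V d → V d → ℝ
  | 0, x, y => if x = y then 1 else 0
  | (k + 1), x, y =>
      (1 / 2) * lazyP d k x y +
        (1 / (4 * d)) * ∑ i : Fin d, (lazyP d k (x + unitV d i) y + lazyP d k (x - unitV d i) y)

/-- `φ` is a centered Gaussian field with covariance function `C`: every finite linear
combination is a centered Gaussian variable with the corresponding variance. -/
def IsCGF {Ω : Type*} [MeasurableSpace Ω] {d : ℕ} (P : Measure Ω)
    (φ : V d → Ω → ℝ) (C : V d → V d → ℝ) : Prop :=
  (∀ x, Measurable (φ x)) ∧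
    ∀ (s : Finset (V d)) (a : V d → ℝ),
      Measure.map (fun ω => ∑ x ∈ s, a x * φ x ω) P =
        gaussianReal 0 (Real.toNNReal (∑ x ∈ s, ∑ y ∈ s, a x * a y * C x y))

/-- `φ` is a Gaussian free field on `ℤ^d`. -/
def IsGFF {Ω : Type*} [MeasurableSpace Ω] {d : ℕ} (P : Measure Ω) (φ : V d → Ω → ℝ) : Prop :=
  IsCGF P φ (green d)

/-- The level set `{φ ≥ h}`. -/
def lvl {d : ℕ} {Ω : Type*} (φ : V d → Ω → ℝ) (h : ℝ) (ω : Ω) : Set (V d) := {x | h ≤ φ x ω}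

/-- The whole field, as one random variable with values in `V d → ℝ`. -/
def proc {Ω : Type*} {d : ℕ} (φ : V d → Ω → ℝ) : Ω → V d → ℝ := fun ω x => φ x ω

/-- The critical parameter `h_*`. -/
def hStar (d : ℕ) {Ω : Type*} [MeasurableSpace Ω] (P : Measure Ω) (φ : V d → Ω → ℝ) : ℝ :=
  sInf {h : ℝ | P {ω | ConnToInf (lvl φ h ω) {(0 : V d)}} = 0}

/-- The critical parameter `h_{**}`. -/
def hStarStar (d : ℕ) {Ω : Type*} [MeasurableSpace Ω] (P : Measure Ω) (φ : V d → Ω → ℝ) : ℝ :=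
  sInf {h : ℝ |
    (⨅ R : ℕ, P {ω | ConnIn (lvl φ h ω) (box d ((R : ℝ) + 1)) (bdry d (2 * ((R : ℝ) + 1)))}) = 0}

/-- `u(R) = exp((log R)^{1/3})`. -/
def ufn (R : ℝ) : ℝ := Real.exp (Real.log R ^ ((1 : ℝ) / 3))

def tildeSet (d : ℕ) {Ω : Type*} [MeasurableSpace Ω] (P : Measure Ω) (φ : V d → Ω → ℝ) :
    Set ℝ :=
  {h : ℝ |
    (⨅ R : ℕ, ENNReal.ofReal (((R : ℝ) + 1) ^ d) *
        P {ω | ¬ ConnIn (lvl φ h ω) (box d (ufn ((R : ℝ) + 1))) (bdry d ((R : ℝ) + 1))}) = 0}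

/-- The critical parameter `h̃`. -/
def hTilde (d : ℕ) {Ω : Type*} [MeasurableSpace Ω] (P : Measure Ω) (φ : V d → Ω → ℝ) : ℝ :=
  sSup (tildeSet d P φ)

/-- The event `Exist(R,α)`. -/
def ExistEv (d : ℕ) {Ω : Type*} (φ : V d → Ω → ℝ) (R : ℕ) (α : ℝ) : Set Ω :=
  {ω | ∃ x ∈ lvl φ α ω ∩ box d (R : ℝ),
    diamGE (comp (lvl φ α ω ∩ box d (R : ℝ)) x) ((R : ℝ) / 5)}

/-- The event `Unique(R,α)`. -/
def UniqueEv (d : ℕ) {Ω : Type*} (φ : V d → Ω → ℝ) (R : ℕ) (α : ℝ) : Set Ω :=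
  {ω | ∀ x ∈ lvl φ α ω ∩ box d (R : ℝ), ∀ y ∈ lvl φ α ω ∩ box d (R : ℝ),
    diamGE (comp (lvl φ α ω ∩ box d (R : ℝ)) x) ((R : ℝ) / 10) →
    diamGE (comp (lvl φ α ω ∩ box d (R : ℝ)) y) ((R : ℝ) / 10) →
    ConnIn (lvl φ α ω ∩ box d (2 * (R : ℝ))) {x} {y}}

/-- `φ` strongly percolates up to level `h`. -/
def StronglyPerc (d : ℕ) {Ω : Type*} [MeasurableSpace Ω] (P : Measure Ω)
    (φ : V d → Ω → ℝ) (h : ℝ) : Prop :=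
  ∃ c : ℝ, 0 < c ∧ ∃ ρ : ℝ, ρ ∈ Set.Ioc (0 : ℝ) 1 ∧
    ∀ α : ℝ, α ≤ h → ∀ R : ℕ, 1 ≤ R →
      ENNReal.ofReal (1 - Real.exp (-c * (R : ℝ) ^ ρ)) ≤ P (ExistEv d φ R α) ∧
      ENNReal.ofReal (1 - Real.exp (-c * (R : ℝ) ^ ρ)) ≤ P (UniqueEv d φ R α)

/-- The critical parameter `h̄`. -/
def hBar (d : ℕ) {Ω : Type*} [MeasurableSpace Ω] (P : Measure Ω) (φ : V d → Ω → ℝ) : ℝ :=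
  sSup {h : ℝ | StronglyPerc d P φ h}


/-- Box with integer radius `r` centered at `x`. -/
def boxI {d : ℕ} (x : V d) (r : ℕ) : Set (V d) := {y | ∀ i, (y i - x i).natAbs ≤ r}

/-- Inner vertex boundary of `boxI x r`. -/
def bdryI {d : ℕ} (x : V d) (r : ℕ) : Set (V d) :=
  {y | y ∈ boxI x r ∧ ∃ z, z ∉ boxI x r ∧ adj y z}

/-- The scales `L_n = ℓ₀^n L₀`. -/
def Lsc (ℓ₀ L₀ n : ℕ) : ℕ := ℓ₀ ^ n * L₀

/-- The renormalised lattice `𝕃_n = (2L_n+1)ℤ^d`. -/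
def latt (d ℓ₀ L₀ n : ℕ) : Set (V d) := {x | ∀ i, ((2 * Lsc ℓ₀ L₀ n + 1 : ℕ) : ℤ) ∣ x i}

/-- The `ℓ∞`-distance between the sets `A` and `B` is at least `r`. -/
def setDistGE {d : ℕ} (A B : Set (V d)) (r : ℕ) : Prop := ∀ a ∈ A, ∀ b ∈ B, r ≤ dinf a b

/-- `Σ_n` centered at `x₀` (with `⌊8.5 κ L_n⌋ = 17 κ L_n / 2`). -/
def SgAt (d ℓ₀ L₀ κ : ℕ) (n : ℕ) (x₀ : V d) : Set (V d) :=
  boxI x₀ (9 * κ * Lsc ℓ₀ L₀ n) \ boxI x₀ (17 * κ * Lsc ℓ₀ L₀ n / 2)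

/-- `Λ_n` centered at `x₀`; `annulus` selects which of the two admissible choices is used. -/
def LamAt (d ℓ₀ L₀ κ : ℕ) (annulus : Bool) (n : ℕ) (x₀ : V d) : Set (V d) :=
  if annulus then boxI x₀ (10 * κ * Lsc ℓ₀ L₀ n) \ boxI x₀ (κ * Lsc ℓ₀ L₀ n)
  else boxI x₀ (10 * κ * Lsc ℓ₀ L₀ n)

/-- Definition 2.1: a bridge between `S₁` and `S₂` inside `Sg`, encoded as the finite set of
pairs `(m, x)` labelling the `m`-boxes `B_{L_m}(x)` constituting it. -/
structure IsBridge (d ℓ₀ L₀ κ K : ℕ) (n : ℕ) (Sg S₁ S₂ : Set (V d))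
    (ℬ : Finset (ℕ × V d)) : Prop where
  /-- B1: each element is an `m`-box, `0 ≤ m ≤ n`, included in `Sg`. -/
  boxes : ∀ b ∈ ℬ, b.1 ≤ n ∧ b.2 ∈ latt d ℓ₀ L₀ b.1 ∧ boxI b.2 (Lsc ℓ₀ L₀ b.1) ⊆ Sg
  /-- B1: the union of the boxes is connected. -/
  conn : IsConnSet (⋃ b ∈ ℬ, boxI b.2 (Lsc ℓ₀ L₀ b.1))
  /-- B2. -/
  ends : ∃ b₁ ∈ ℬ, ∃ b₂ ∈ ℬ, b₁.1 = 0 ∧ b₂.1 = 0 ∧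
    (boxI b₁.2 (Lsc ℓ₀ L₀ 0) ∩ S₁).Nonempty ∧ (boxI b₂.2 (Lsc ℓ₀ L₀ 0) ∩ S₂).Nonempty ∧
    ∀ b ∈ ℬ, b ≠ b₁ → b ≠ b₂ → boxI b.2 (Lsc ℓ₀ L₀ b.1) ∩ (S₁ ∪ S₂) = ∅
  /-- B3. -/
  far : ∀ b ∈ ℬ, 1 ≤ b.1 →
    setDistGE (boxI b.2 (Lsc ℓ₀ L₀ b.1)) (S₁ ∪ S₂) (κ * Lsc ℓ₀ L₀ b.1)
  /-- B4. -/
  count : ∀ m : ℕ, (ℬ.filter fun b => b.1 = m).card ≤ 2 * K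

/-- Definition 2.2 (conditions G1 and G2): the collection of boxes `ℬ` is good. -/
def GoodCol {Ω : Type*} (d ℓ₀ L₀ : ℕ) (F : V d → Set Ω) (H : ℕ → V d → Set Ω)
    (ℬ : Finset (ℕ × V d)) (ω : Ω) : Prop :=
  (∀ b ∈ ℬ, b.1 = 0 → ω ∈ F b.2) ∧
    ∀ b ∈ ℬ, ∀ j : ℕ, max b.1 1 ≤ j →
      ∀ y ∈ latt d ℓ₀ L₀ j, b.2 ∈ boxI y (Lsc ℓ₀ L₀ j) → ω ∈ H j y

/-- A set `S` is admissible (relative to the center `x₀` and scale `n`). -/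
def AdmissibleAt (d ℓ₀ L₀ κ : ℕ) (n : ℕ) (x₀ : V d) (S : Set (V d)) : Prop :=
  (∀ x ∈ S, (comp S x ∩ bdryI x₀ (10 * κ * Lsc ℓ₀ L₀ n)).Nonempty) ∧
    ∃ x ∈ S, (comp S x ∩ boxI x₀ (8 * κ * Lsc ℓ₀ L₀ n)).Nonempty

/-- The event `𝒢_{n,x₀}`: between every pair of admissible sets there is a good bridge
inside `x₀ + Σ_n`. -/
def GEvent {Ω : Type*} (d ℓ₀ L₀ κ K : ℕ) (F : V d → Set Ω) (H : ℕ → V d → Set Ω)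
    (annulus : Bool) (n : ℕ) (x₀ : V d) : Set Ω :=
  {ω | ∀ S₁ S₂ : Set (V d),
    S₁ ⊆ LamAt d ℓ₀ L₀ κ annulus n x₀ → S₂ ⊆ LamAt d ℓ₀ L₀ κ annulus n x₀ →
    AdmissibleAt d ℓ₀ L₀ κ n x₀ S₁ → AdmissibleAt d ℓ₀ L₀ κ n x₀ S₂ →
    ∃ ℬ : Finset (ℕ × V d),
      IsBridge d ℓ₀ L₀ κ K n (SgAt d ℓ₀ L₀ κ n x₀) S₁ S₂ ℬ ∧
        GoodCol d ℓ₀ L₀ F H ℬ ω}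

/-- Condition C1: the families `F, H₁, H₂, …` are mutually independent. -/
def CondC1 {Ω : Type*} [MeasurableSpace Ω] (d ℓ₀ L₀ : ℕ) (P : Measure Ω)
    (F : V d → Set Ω) (H : ℕ → V d → Set Ω) : Prop :=
  iIndep (fun n : ℕ => MeasurableSpace.generateFrom
    (if n = 0 then {A | ∃ x ∈ latt d ℓ₀ L₀ 0, A = F x}
     else {A | ∃ x ∈ latt d ℓ₀ L₀ n, A = H n x})) P

/-- Condition C2: events indexed by `κ/2`-separated points are independent. -/
def CondC2 {Ω : Type*} [MeasurableSpace Ω] (d ℓ₀ L₀ κ : ℕ) (P : Measure Ω)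
    (F : V d → Set Ω) (H : ℕ → V d → Set Ω) : Prop :=
  ∀ U : Finset (V d), (∀ u ∈ U, ∀ v ∈ U, u ≠ v → κ ≤ 2 * dinf u v) →
    iIndepSet (fun u : U => F fun i => (2 * (Lsc ℓ₀ L₀ 0 : ℤ) + 1) * u.1 i) P ∧
      ∀ n : ℕ, 1 ≤ n →
        iIndepSet (fun u : U => H n fun i => (2 * (Lsc ℓ₀ L₀ n : ℤ) + 1) * u.1 i) P

/-- A `0`-bridge inside `Sg` between `S₁` and `S₂`: a collection of `0`-boxes whose union is
a connected subset of `Sg` intersecting both `S₁` and `S₂`. -/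
def Is0Bridge (d ℓ₀ L₀ : ℕ) (Sg S₁ S₂ : Set (V d)) (ℬ : Finset (V d)) : Prop :=
  (∀ x ∈ ℬ, x ∈ latt d ℓ₀ L₀ 0) ∧
    (⋃ x ∈ ℬ, boxI x (Lsc ℓ₀ L₀ 0)) ⊆ Sg ∧
    IsConnSet (⋃ x ∈ ℬ, boxI x (Lsc ℓ₀ L₀ 0)) ∧
    ((⋃ x ∈ ℬ, boxI x (Lsc ℓ₀ L₀ 0)) ∩ S₁).Nonempty ∧
    ((⋃ x ∈ ℬ, boxI x (Lsc ℓ₀ L₀ 0)) ∩ S₂).Nonempty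

/-- A `0`-bridge is good: G1 and G2 hold for each of its `0`-boxes. -/
def Good0 {Ω : Type*} (d ℓ₀ L₀ : ℕ) (F : V d → Set Ω) (H : ℕ → V d → Set Ω)
    (ℬ : Finset (V d)) (ω : Ω) : Prop :=
  ∀ x ∈ ℬ, ω ∈ F x ∧
    ∀ j : ℕ, 1 ≤ j → ∀ y ∈ latt d ℓ₀ L₀ j, x ∈ boxI y (Lsc ℓ₀ L₀ j) → ω ∈ H j y

/-- The event `𝒢_n⁰` with notion (i) of admissibility: there is a good `0`-bridge inside
`Σ_n` between any two admissible sets `S₁, S₂ ⊆ Λ_n = B_{10κL_n}`. -/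
def G0EventI {Ω : Type*} (d ℓ₀ L₀ κ : ℕ) (F : V d → Set Ω) (H : ℕ → V d → Set Ω)
    (n : ℕ) : Set Ω :=
  {ω | ∀ S₁ S₂ : Set (V d),
    S₁ ⊆ boxI (0 : V d) (10 * κ * Lsc ℓ₀ L₀ n) → S₂ ⊆ boxI (0 : V d) (10 * κ * Lsc ℓ₀ L₀ n) →
    AdmissibleAt d ℓ₀ L₀ κ n 0 S₁ → AdmissibleAt d ℓ₀ L₀ κ n 0 S₂ →
    ∃ ℬ : Finset (V d), Is0Bridge d ℓ₀ L₀ (SgAt d ℓ₀ L₀ κ n 0) S₁ S₂ ℬ ∧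
      Good0 d ℓ₀ L₀ F H ℬ ω}

/-- The event `𝒢_n⁰` with notion (ii) of admissibility: there is a good `0`-bridge inside
`Λ_n` between any two connected subsets of `Λ̲_n = B_{8κL_n}` of diameter at least `κL_n`. -/
def G0EventII {Ω : Type*} (d ℓ₀ L₀ κ : ℕ) (F : V d → Set Ω) (H : ℕ → V d → Set Ω)
    (n : ℕ) : Set Ω :=
  {ω | ∀ S₁ S₂ : Set (V d),
    S₁ ⊆ boxI (0 : V d) (8 * κ * Lsc ℓ₀ L₀ n) → S₂ ⊆ boxI (0 : V d) (8 * κ * Lsc ℓ₀ L₀ n) →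
    IsConnSet S₁ → IsConnSet S₂ →
    diamGE S₁ ((κ * Lsc ℓ₀ L₀ n : ℕ) : ℝ) → diamGE S₂ ((κ * Lsc ℓ₀ L₀ n : ℕ) : ℝ) →
    ∃ ℬ : Finset (V d),
      Is0Bridge d ℓ₀ L₀ (boxI (0 : V d) (10 * κ * Lsc ℓ₀ L₀ n)) S₁ S₂ ℬ ∧
        Good0 d ℓ₀ L₀ F H ℬ ω}

/-!
The proof is a renormalisation argument. Call a point of `𝕃_0` bad if an event of scale `0` fails
near it, and a point of `𝕃_{n+1}` bad if an event of scale `n + 1` fails near it or if two bad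
points of `𝕃_n` nearby are far apart compared with `κL_n`.

If a point of `𝕃_{n+1}` is not bad, then all bad points of `𝕃_n` around it lie in one box of radius
of order `κL_n`. Since `d ≥ 3`, a larger box stays connected when this one is removed. Sup-norm
spheres are connected too, and one of them avoids the exceptional box. Moving along
nearest-neighbour paths through the remaining region, the bridges supplied by scale `n` are glued
one to the next, which yields good bridges at scale `n + 1`.

Unfolding the recursion, badness is witnessed by a finite set of failing events which are mutually
independent, so the probability `b n` of being bad satisfies
`b (n + 1) ≤ N₁ * p (n + 1) + N₂ * b n ^ 2`, where `p n` bounds the failure probabilities of scale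
`n`. This contracts doubly exponentially once `p n` is a small multiple of `2^{-2^n}`. A union bound
handles the events at scales above `n`.
-/

/-! ### The sup-distance -/

section SupDistance

variable {d : ℕ} {x y z : V d} {r s : ℕ}

theorem dinf_le_iff : dinf x y ≤ r ↔ ∀ i, (x i - y i).natAbs ≤ r := by
  simp [dinf]

theorem natAbs_sub_le_dinf (x y : V d) (i : Fin d) : (x i - y i).natAbs ≤ dinf x y :=
  dinf_le_iff.1 le_rfl i

theorem mem_boxI_iff : y ∈ boxI x r ↔ dinf y x ≤ r :=
  dinf_le_iff.symm

theorem dinf_self (x : V d) : dinf x x = 0 :=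
  Nat.le_zero.1 (dinf_le_iff.2 fun i => by simp)

theorem dinf_comm (x y : V d) : dinf x y = dinf y x :=
  Finset.sup_congr rfl fun i _ => by omega

theorem dinf_triangle (x y z : V d) : dinf x z ≤ dinf x y + dinf y z :=
  dinf_le_iff.2 fun i => by
    have hxy := natAbs_sub_le_dinf x y i
    have hyz := natAbs_sub_le_dinf y z i
    omega

theorem dinf_smul (c : ℤ) (x y : V d) : dinf (c • x) (c • y) = c.natAbs * dinf x y := by
  simp only [dinf, Pi.smul_apply, smul_eq_mul, ← mul_sub, Int.natAbs_mul, Finset.mul_sup₀]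

theorem self_mem_boxI (x : V d) (r : ℕ) : x ∈ boxI x r :=
  mem_boxI_iff.2 (by simp [dinf_self])

theorem boxI_subset_boxI (h : dinf x y + r ≤ s) : boxI x r ⊆ boxI y s := fun z hz => by
  rw [mem_boxI_iff] at hz ⊢
  have := dinf_triangle z x y
  omega

theorem boxI_mono (h : r ≤ s) : boxI x r ⊆ boxI x s :=
  boxI_subset_boxI (by rwa [dinf_self, zero_add])

theorem diamGE_natCast_iff {S : Set (V d)} :
    diamGE S (r : ℝ) ↔ ∃ a ∈ S, ∃ b ∈ S, r ≤ dinf a b := by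
  simp only [diamGE, Nat.cast_le]

theorem diamGE_natCast_of_le {S : Set (V d)} {m n : ℕ} (hmn : m ≤ n) (hS : diamGE S (n : ℝ)) :
    diamGE S (m : ℝ) :=
  let ⟨a, ha, b, hb, hab⟩ := hS
  ⟨a, ha, b, hb, (Nat.cast_le.2 hmn).trans hab⟩

theorem diamGE_boxI (hd : 0 < d) (x : V d) (r : ℕ) : diamGE (boxI x r) (r : ℝ) := by
  refine diamGE_natCast_iff.2 ⟨fun i => x i + r, fun i => by simp, x, self_mem_boxI x r, ?_⟩
  have hcoord := natAbs_sub_le_dinf (fun i => x i + r) x ⟨0, hd⟩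
  rwa [add_sub_cancel_left, Int.natAbs_natCast] at hcoord

/-- The box `boxI x r` as a finset, for counting and finite unions. -/
def boxFinset (x : V d) (r : ℕ) : Finset (V d) :=
  Finset.Icc (fun i => x i - r) (fun i => x i + r)

theorem mem_boxFinset : y ∈ boxFinset x r ↔ dinf y x ≤ r := by
  simp only [boxFinset, Finset.mem_Icc, Pi.le_def, ← forall_and, dinf_le_iff]
  exact forall_congr' fun i => by omega

theorem card_boxFinset (x : V d) (r : ℕ) : (boxFinset x r).card = (2 * r + 1) ^ d := by
  have hside : ∀ i, (x i + r + 1 - (x i - r)).toNat = 2 * r + 1 := fun i => by omega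
  simp [boxFinset, Pi.card_Icc, hside]

theorem adj.symm (h : adj x y) : adj y x :=
  (Finset.sum_congr rfl fun i _ => by omega).trans h

theorem adj.dinf_le_one (h : adj x y) : dinf x y ≤ 1 := by
  rw [dinf_le_iff, ← show ∑ i, (x i - y i).natAbs = 1 from h]
  exact fun i => Finset.single_le_sum_of_canonicallyOrdered
    (f := fun j => (x j - y j).natAbs) (Finset.mem_univ i)

end SupDistance

/-! ### Connectivity inside a set -/

section Connectivity

variable {d : ℕ} {S T : Set (V d)} {x y z : V d}

/-- `x` and `y` are joined by a nearest-neighbour path in `S`. In contrast to `ConnIn S {x} {y}`,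
the empty path is allowed even when `x = y` lies outside `S`. -/
def ReachableIn (S : Set (V d)) : V d → V d → Prop :=
  Relation.ReflTransGen fun a b => adj a b ∧ a ∈ S ∧ b ∈ S

namespace ReachableIn

theorem refl (S : Set (V d)) (x : V d) : ReachableIn S x x :=
  Relation.ReflTransGen.refl

theorem trans (hxy : ReachableIn S x y) (hyz : ReachableIn S y z) : ReachableIn S x z :=
  Relation.ReflTransGen.trans hxy hyz

theorem mono (hST : S ⊆ T) (h : ReachableIn S x y) : ReachableIn T x y :=
  Relation.ReflTransGen.mono (fun _ _ hab => ⟨hab.1, hST hab.2.1, hST hab.2.2⟩) _ _ h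

theorem symm (h : ReachableIn S x y) : ReachableIn S y x := by
  induction h with
  | refl => exact refl S x
  | tail _ hbc ih => exact ih.head ⟨hbc.1.symm, hbc.2.2, hbc.2.1⟩

theorem mem (hx : x ∈ S) (h : ReachableIn S x y) : y ∈ S := by
  cases h with
  | refl => exact hx
  | tail _ hbc => exact hbc.2.2

theorem connIn (hx : x ∈ S) (h : ReachableIn S x y) : ConnIn S {x} {y} := by
  induction h with
  | refl => exact ⟨0, fun _ => x, rfl, rfl, fun _ _ => hx, fun k hk => absurd hk (by omega)⟩
  | @tail b c _ hbc ih =>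
    obtain ⟨n, γ, hγ0, hγn, hγS, hγadj⟩ := ih
    refine ⟨n + 1, Function.update γ (n + 1) c, by simpa using hγ0, by simp, ?_, ?_⟩
    · intro k hk
      rcases hk.lt_or_eq with hk | rfl
      · simpa [hk.ne] using hγS k (by omega)
      · simpa using hbc.2.2
    · intro k hk
      rcases (Nat.lt_succ_iff.1 hk).lt_or_eq with hk' | rfl
      · simpa [hk.ne, hk'.ne] using hγadj k hk'
      · simpa [show γ k = b from hγn] using hbc.1

end ReachableIn

theorem connIn_singleton_iff : ConnIn S {x} {y} ↔ x ∈ S ∧ ReachableIn S x y := by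
  refine ⟨?_, fun h => h.2.connIn h.1⟩
  rintro ⟨n, γ, rfl, rfl, hγS, hγadj⟩
  refine ⟨hγS 0 n.zero_le, ?_⟩
  exact (reflTransGen_of_succ_of_le (fun k l => adj (γ k) (γ l) ∧ γ k ∈ S ∧ γ l ∈ S)
    (fun k hk => ⟨hγadj k hk.2, hγS k hk.2.le, hγS (k + 1) hk.2⟩) n.zero_le).lift γ fun _ _ h => h

theorem isConnSet_iff : IsConnSet S ↔ ∀ x ∈ S, ∀ y ∈ S, ReachableIn S x y :=
  forall₂_congr fun x hx => forall₂_congr fun y _ => by simp [connIn_singleton_iff, hx]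

theorem isConnSet_of_forall_reachableIn (h : ∀ y ∈ S, ReachableIn S x y) : IsConnSet S :=
  isConnSet_iff.2 fun y hy z hz => (h y hy).symm.trans (h z hz)

theorem IsConnSet.union (hS : IsConnSet S) (hT : IsConnSet T) (h : (S ∩ T).Nonempty) :
    IsConnSet (S ∪ T) := by
  obtain ⟨p, hpS, hpT⟩ := h
  rw [isConnSet_iff] at hS hT
  refine isConnSet_of_forall_reachableIn (x := p) ?_
  rintro y (hy | hy)
  · exact (hS p hpS y hy).mono subset_union_left
  · exact (hT p hpT y hy).mono subset_union_right

theorem IsConnSet.biUnion {B : V d → Set (V d)} (hS : IsConnSet S) (hB : ∀ x ∈ S, IsConnSet (B x))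
    (hmem : ∀ x ∈ S, x ∈ B x) : IsConnSet (⋃ x ∈ S, B x) := by
  have hsub : S ⊆ ⋃ x ∈ S, B x := fun x hx => mem_biUnion hx (hmem x hx)
  have hreach : ∀ x ∈ S, ∀ y ∈ B x, ReachableIn (⋃ x ∈ S, B x) x y := fun x hx y hy =>
    (isConnSet_iff.1 (hB x hx) x (hmem x hx) y hy).mono (subset_biUnion_of_mem (u := B) hx)
  refine isConnSet_iff.2 fun a ha b hb => ?_
  obtain ⟨x, hx, hax⟩ := mem_iUnion₂.1 ha
  obtain ⟨y, hy, hby⟩ := mem_iUnion₂.1 hb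
  exact ((hreach x hx a hax).symm.trans ((isConnSet_iff.1 hS x hx y hy).mono hsub)).trans
    (hreach y hy b hby)

theorem comp_subset (S : Set (V d)) (x : V d) : comp S x ⊆ S := fun _ hy =>
  let ⟨hx, hxy⟩ := connIn_singleton_iff.1 hy
  hxy.mem hx

theorem self_mem_comp (hx : x ∈ S) : x ∈ comp S x :=
  connIn_singleton_iff.2 ⟨hx, .refl S x⟩

theorem mem_comp_of_adj (hy : y ∈ comp S x) (hyz : adj y z) (hz : z ∈ S) : z ∈ comp S x :=
  let ⟨hx, hxy⟩ := connIn_singleton_iff.1 hy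
  connIn_singleton_iff.2 ⟨hx, hxy.tail ⟨hyz, hxy.mem hx, hz⟩⟩

theorem isConnSet_comp (S : Set (V d)) (x : V d) : IsConnSet (comp S x) := by
  refine isConnSet_of_forall_reachableIn (x := x) fun y hy => ?_
  obtain ⟨hx, hxy⟩ := connIn_singleton_iff.1 hy
  suffices h : y ∈ comp S x ∧ ReachableIn (comp S x) x y from h.2
  clear hy
  induction hxy with
  | refl => exact ⟨self_mem_comp hx, .refl _ x⟩
  | tail _ hbc ih =>
    have hc := mem_comp_of_adj ih.1 hbc.1 hbc.2.2
    exact ⟨hc, ih.2.tail ⟨hbc.1, ih.1, hc⟩⟩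

theorem IsConnSet.exists_adj_mem_notMem (hS : IsConnSet S) (hx : x ∈ S) (hxT : x ∈ T)
    (hy : y ∈ S) (hyT : y ∉ T) : ∃ a ∈ S ∩ T, ∃ b ∈ S \ T, adj a b := by
  have hxy := isConnSet_iff.1 hS x hx y hy
  clear hy
  induction hxy with
  | refl => exact absurd hxT hyT
  | @tail b c _ hbc ih =>
    by_cases hb : b ∈ T
    · exact ⟨b, ⟨hbc.2.1, hb⟩, c, ⟨hbc.2.2, hyT⟩, hbc.1⟩
    · exact ih hb

theorem IsConnSet.exists_dinf_eq (hS : IsConnSet S) (hx : x ∈ S) (hy : y ∈ S) {ρ : ℕ}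
    (hxρ : dinf x z ≤ ρ) (hyρ : ρ ≤ dinf y z) : ∃ a ∈ S, dinf a z = ρ := by
  by_cases hy' : y ∈ boxI z ρ
  · exact ⟨y, hy, le_antisymm (mem_boxI_iff.1 hy') hyρ⟩
  obtain ⟨a, ⟨haS, ha⟩, b, ⟨-, hb⟩, hab⟩ :=
    hS.exists_adj_mem_notMem hx (mem_boxI_iff.2 hxρ) hy hy'
  refine ⟨a, haS, ?_⟩
  rw [mem_boxI_iff] at ha hb
  have htri := dinf_triangle b a z
  have hone := hab.symm.dinf_le_one
  omega

theorem exists_mem_le_dinf {r : ℕ} (hS : diamGE S ((2 * r : ℕ) : ℝ)) (x : V d) :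
    ∃ y ∈ S, r ≤ dinf y x := by
  obtain ⟨a, ha, b, hb, hab⟩ := diamGE_natCast_iff.1 hS
  by_contra! hnear
  have htri := dinf_triangle a x b
  have hax := hnear a ha
  have hbx := hnear b hb
  rw [dinf_comm] at hbx
  omega

theorem IsConnSet.exists_subset_boxI {r : ℕ} (hS : IsConnSet S)
    (hdiam : diamGE S ((2 * r : ℕ) : ℝ)) (hx : x ∈ S) :
    ∃ A ⊆ S, A ⊆ boxI x r ∧ IsConnSet A ∧ diamGE A (r : ℝ) := by
  have hxB : x ∈ S ∩ boxI x r := ⟨hx, self_mem_boxI x r⟩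
  refine ⟨comp (S ∩ boxI x r) x, (comp_subset _ _).trans inter_subset_left,
    (comp_subset _ _).trans inter_subset_right, isConnSet_comp _ _, diamGE_natCast_iff.2 ?_⟩
  suffices h : ∃ a ∈ comp (S ∩ boxI x r) x, r ≤ dinf a x from
    let ⟨a, ha, har⟩ := h
    ⟨a, ha, x, self_mem_comp hxB, har⟩
  obtain ⟨y, hy, hyr⟩ := exists_mem_le_dinf hdiam x
  by_cases hyA : y ∈ comp (S ∩ boxI x r) x
  · exact ⟨y, hyA, hyr⟩
  obtain ⟨a, ⟨-, haA⟩, b, ⟨hbS, hbA⟩, hab⟩ :=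
    hS.exists_adj_mem_notMem hx (self_mem_comp hxB) hy hyA
  refine ⟨a, haA, ?_⟩
  have hb : b ∉ boxI x r := fun hb => hbA (mem_comp_of_adj haA hab ⟨hbS, hb⟩)
  rw [mem_boxI_iff] at hb
  have htri := dinf_triangle b a x
  have hone := hab.symm.dinf_le_one
  omega

end Connectivity

/-! ### Boxes with a box removed -/

section BoxDiffBox

variable {d : ℕ} {W : Set (V d)} {x y z : V d} {M N : ℕ}

theorem exists_adj_mem_uIcc_of_ne (hxy : x ≠ y) : ∃ x' ∈ uIcc x y, adj x x' ∧
    ∑ i, (x' i - y i).natAbs < ∑ i, (x i - y i).natAbs := by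
  obtain ⟨i, hi⟩ := Function.ne_iff.1 hxy
  obtain ⟨e, he, hey, hmem⟩ : ∃ e : ℤ, (x i - e).natAbs = 1 ∧
      (e - y i).natAbs < (x i - y i).natAbs ∧ e ∈ uIcc (x i) (y i) := by
    simp only [mem_uIcc]
    rcases lt_or_gt_of_ne hi with h | h
    · exact ⟨x i + 1, by omega, by omega, by omega⟩
    · exact ⟨x i - 1, by omega, by omega, by omega⟩
  refine ⟨Function.update x i e, ?_, ?_, ?_⟩
  · rw [← pi_univ_uIcc]
    intro j _
    rcases eq_or_ne j i with rfl | hj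
    · simpa using hmem
    · simp [hj]
  · rw [adj, Finset.sum_eq_single i (fun j _ hj => by simp [hj]) (by simp)]
    simpa using he
  · refine Finset.sum_lt_sum (fun j _ => ?_) ⟨i, Finset.mem_univ i, by simpa using hey⟩
    rcases eq_or_ne j i with rfl | hj
    · simpa using hey.le
    · simp [hj]

theorem apply_mem_uIcc (hz : z ∈ uIcc x y) (i : Fin d) : z i ∈ uIcc (x i) (y i) :=
  (pi_univ_uIcc x y).symm.subset hz i (mem_univ i)

theorem reachableIn_of_uIcc_subset (h : uIcc x y ⊆ W) : ReachableIn W x y := by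
  induction hn : ∑ i, (x i - y i).natAbs using Nat.strong_induction_on generalizing x with
  | _ n ih =>
    rcases eq_or_ne x y with rfl | hxy
    · exact .refl W x
    obtain ⟨x', hx', hadj, hlt⟩ := exists_adj_mem_uIcc_of_ne hxy
    have htail := ih _ (hn ▸ hlt) ((uIcc_subset_uIcc_right hx').trans h) rfl
    exact htail.head ⟨hadj, h left_mem_uIcc, h hx'⟩

theorem isConnSet_boxI (x : V d) (r : ℕ) : IsConnSet (boxI x r) := by
  refine isConnSet_iff.2 fun y hy z hz => reachableIn_of_uIcc_subset fun a ha i => ?_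
  have hai := mem_uIcc.1 (apply_mem_uIcc ha i)
  have hyi := hy i
  have hzi := hz i
  omega

theorem reachableIn_boxI_diff_boxI_of_apply_eq {p q : V d} {i : Fin d} (hp : p ∈ boxI x N)
    (hq : q ∈ boxI x N) (hpq : p i = q i) (hM : M < (p i - z i).natAbs) :
    ReachableIn (boxI x N \ boxI z M) p q := by
  refine reachableIn_of_uIcc_subset fun a ha => ?_
  refine ⟨fun j => ?_, fun haz => ?_⟩
  · have hj := mem_uIcc.1 (apply_mem_uIcc ha j)
    have hpj := hp j
    have hqj := hq j
    omega
  · have hi : a i = p i := by simpa [← hpq] using apply_mem_uIcc ha i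
    have := haz i
    omega

/-- Three directions are needed: `p` and `q` avoid the small box thanks to coordinates `i` and `j`,
and a third coordinate can then be moved freely to a level that misses the small box. -/
theorem isConnSet_boxI_diff_boxI (hd : 3 ≤ d) (hMN : M < N) :
    IsConnSet (boxI x N \ boxI z M) := by
  refine isConnSet_iff.2 fun p hp q hq => ?_
  obtain ⟨i, hi⟩ : ∃ i, M < (p i - z i).natAbs := by simpa [boxI] using hp.2
  obtain ⟨j, hj⟩ : ∃ j, M < (q j - z j).natAbs := by simpa [boxI] using hq.2
  obtain ⟨k, hk⟩ : ∃ k, k ∉ ({i, j} : Finset (Fin d)) := by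
    by_contra! hall
    have hcard := Finset.card_le_card fun k (_ : k ∈ Finset.univ) => hall k
    have := Finset.card_le_two (a := i) (b := j)
    simp only [Finset.card_univ, Fintype.card_fin] at hcard
    omega
  obtain ⟨hik, hjk⟩ : i ≠ k ∧ j ≠ k := by
    simp only [Finset.mem_insert, Finset.mem_singleton, not_or] at hk
    exact ⟨Ne.symm hk.1, Ne.symm hk.2⟩
  obtain ⟨t, htx, htz⟩ : ∃ t : ℤ, (t - x k).natAbs ≤ N ∧ M < (t - z k).natAbs := by
    rcases le_total (z k) (x k) with h | h
    · exact ⟨x k + N, by omega, by omega⟩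
    · exact ⟨x k - N, by omega, by omega⟩
  have hupdate : ∀ {y : V d}, y ∈ boxI x N → Function.update y k t ∈ boxI x N := fun hy l => by
    rcases eq_or_ne l k with rfl | hl
    · simpa using htx
    · simpa [hl] using hy l
  have hp' : ReachableIn (boxI x N \ boxI z M) p (Function.update p k t) :=
    reachableIn_boxI_diff_boxI_of_apply_eq hp.1 (hupdate hp.1) (by simp [hik]) hi
  have hlevel : ReachableIn (boxI x N \ boxI z M) (Function.update p k t) (Function.update q k t) :=
    reachableIn_boxI_diff_boxI_of_apply_eq (i := k) (hupdate hp.1) (hupdate hq.1) (by simp)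
      (by simpa using htz)
  have hq' : ReachableIn (boxI x N \ boxI z M) q (Function.update q k t) :=
    reachableIn_boxI_diff_boxI_of_apply_eq hq.1 (hupdate hq.1) (by simp [hjk]) hj
  exact (hp'.trans hlevel).trans hq'.symm

theorem isConnSet_setOf_dinf_eq (hd : 3 ≤ d) (x : V d) {ρ : ℕ} (hρ : 0 < ρ) :
    IsConnSet {y | dinf y x = ρ} := by
  convert isConnSet_boxI_diff_boxI (x := x) (z := x) hd (Nat.sub_one_lt_of_lt hρ) using 1
  ext y
  simp only [mem_ofPred_eq, Set.mem_sdiff, mem_boxI_iff]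
  omega

end BoxDiffBox

/-! ### Chaining bridges -/

section Bridges

variable {d ℓ₀ L₀ : ℕ} {g g' : V d → Prop} {Sg Sg' S₁ S₂ T₁ T₂ : Set (V d)}
  {ℬ ℬ₁ ℬ₂ : Finset (V d)} {r s R : ℕ} {x y : V d}

/-- The region covered by the `0`-boxes with centers in `ℬ`. -/
def zeroBoxes (ℓ₀ L₀ : ℕ) (ℬ : Finset (V d)) : Set (V d) :=
  ⋃ x ∈ ℬ, boxI x (Lsc ℓ₀ L₀ 0)

theorem mem_zeroBoxes (hx : x ∈ ℬ) (hy : y ∈ boxI x (Lsc ℓ₀ L₀ 0)) : y ∈ zeroBoxes ℓ₀ L₀ ℬ :=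
  mem_biUnion hx hy

theorem zeroBoxes_union (ℬ₁ ℬ₂ : Finset (V d)) :
    zeroBoxes ℓ₀ L₀ (ℬ₁ ∪ ℬ₂) = zeroBoxes ℓ₀ L₀ ℬ₁ ∪ zeroBoxes ℓ₀ L₀ ℬ₂ :=
  Finset.set_biUnion_union ..

theorem Is0Bridge.mono (h : Is0Bridge d ℓ₀ L₀ Sg S₁ S₂ ℬ) (hSg : Sg ⊆ Sg') (h₁ : S₁ ⊆ T₁)
    (h₂ : S₂ ⊆ T₂) : Is0Bridge d ℓ₀ L₀ Sg' T₁ T₂ ℬ :=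
  let ⟨hlatt, hsub, hconn, hmeet₁, hmeet₂⟩ := h
  ⟨hlatt, hsub.trans hSg, hconn, hmeet₁.mono (inter_subset_inter_right _ h₁),
    hmeet₂.mono (inter_subset_inter_right _ h₂)⟩

theorem Is0Bridge.union (h₁ : Is0Bridge d ℓ₀ L₀ Sg S₁ T₁ ℬ₁) (h₂ : Is0Bridge d ℓ₀ L₀ Sg T₂ S₂ ℬ₂)
    (hmeet : (zeroBoxes ℓ₀ L₀ ℬ₁ ∩ zeroBoxes ℓ₀ L₀ ℬ₂).Nonempty) :
    Is0Bridge d ℓ₀ L₀ Sg S₁ S₂ (ℬ₁ ∪ ℬ₂) := by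
  obtain ⟨hlatt₁, hsub₁, hconn₁, hend₁, -⟩ := h₁
  obtain ⟨hlatt₂, hsub₂, hconn₂, -, hend₂⟩ := h₂
  have hunion := zeroBoxes_union (ℓ₀ := ℓ₀) (L₀ := L₀) ℬ₁ ℬ₂
  simp only [zeroBoxes] at hmeet hunion
  refine ⟨fun x hx => (Finset.mem_union.1 hx).elim (hlatt₁ x) (hlatt₂ x), ?_⟩
  rw [hunion]
  exact ⟨union_subset hsub₁ hsub₂, hconn₁.union hconn₂ hmeet,
    hend₁.mono (inter_subset_inter_left _ subset_union_left),
    hend₂.mono (inter_subset_inter_left _ subset_union_right)⟩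

/-- There is a `0`-bridge inside `Sg` between `S₁` and `S₂` all of whose box centers satisfy
the goodness predicate `g`. -/
def HasBridge (ℓ₀ L₀ : ℕ) (g : V d → Prop) (Sg S₁ S₂ : Set (V d)) : Prop :=
  ∃ ℬ : Finset (V d), Is0Bridge d ℓ₀ L₀ Sg S₁ S₂ ℬ ∧ ∀ x ∈ ℬ, g x

theorem HasBridge.mono (h : HasBridge ℓ₀ L₀ g Sg S₁ S₂) (hSg : Sg ⊆ Sg') (h₁ : S₁ ⊆ T₁)
    (h₂ : S₂ ⊆ T₂) : HasBridge ℓ₀ L₀ g Sg' T₁ T₂ :=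
  let ⟨ℬ, hℬ, hg⟩ := h
  ⟨ℬ, hℬ.mono hSg h₁ h₂, hg⟩

theorem HasBridge.imp (h : HasBridge ℓ₀ L₀ g Sg S₁ S₂)
    (himp : ∀ x ∈ latt d ℓ₀ L₀ 0, x ∈ Sg → g x → g' x) : HasBridge ℓ₀ L₀ g' Sg S₁ S₂ :=
  let ⟨ℬ, hℬ, hg⟩ := h
  ⟨ℬ, hℬ, fun x hx =>
    himp x (hℬ.1 x hx) (hℬ.2.1 (mem_zeroBoxes hx (self_mem_boxI x _))) (hg x hx)⟩

/-- Around `x`, any two connected sets of diameter at least `r` inside the box of radius `s` are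
joined by a good bridge inside the box of radius `R`. -/
def LinksAt (ℓ₀ L₀ : ℕ) (g : V d → Prop) (r s R : ℕ) (x : V d) : Prop :=
  ∀ S₁ S₂ : Set (V d), S₁ ⊆ boxI x s → S₂ ⊆ boxI x s → IsConnSet S₁ → IsConnSet S₂ →
    diamGE S₁ (r : ℝ) → diamGE S₂ (r : ℝ) → HasBridge ℓ₀ L₀ g (boxI x R) S₁ S₂

theorem LinksAt.of_dinf_le {s' R' : ℕ} (h : LinksAt ℓ₀ L₀ g r s R x) (hs : dinf y x + s' ≤ s)
    (hR : dinf x y + R ≤ R') : LinksAt ℓ₀ L₀ g r s' R' y :=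
  fun S₁ S₂ h₁ h₂ hc₁ hc₂ hd₁ hd₂ =>
    (h S₁ S₂ (h₁.trans (boxI_subset_boxI hs)) (h₂.trans (boxI_subset_boxI hs)) hc₁ hc₂ hd₁
      hd₂).mono (boxI_subset_boxI hR) subset_rfl subset_rfl

theorem LinksAt.imp (h : LinksAt ℓ₀ L₀ g r s R x) (himp : ∀ y ∈ boxI x R, g y → g' y) :
    LinksAt ℓ₀ L₀ g' r s R x :=
  fun S₁ S₂ h₁ h₂ hc₁ hc₂ hd₁ hd₂ => (h S₁ S₂ h₁ h₂ hc₁ hc₂ hd₁ hd₂).imp fun y _ => himp y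

/-- A bridge between two far apart boxes contains a connected set of diameter `r` near `x`, and any
bridge hitting that set can be glued to it. -/
theorem LinksAt.exists_connector (hd : 0 < d) (h : LinksAt ℓ₀ L₀ g r s R x) (hs : 5 * r ≤ s) :
    ∃ ℬ, Is0Bridge d ℓ₀ L₀ (boxI x R) univ univ ℬ ∧ (∀ y ∈ ℬ, g y) ∧
      ∃ A ⊆ zeroBoxes ℓ₀ L₀ ℬ, A ⊆ boxI x (2 * r) ∧ IsConnSet A ∧ diamGE A (r : ℝ) := by
  set x' : V d := fun i => x i + (4 * r : ℕ) with hx'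
  have hx'x : dinf x' x ≤ 4 * r := dinf_le_iff.2 fun i => by simp only [hx']; omega
  obtain ⟨ℬ, hℬ, hg⟩ := h (boxI x r) (boxI x' r) (boxI_mono (by omega))
    (boxI_subset_boxI (by omega)) (isConnSet_boxI x r) (isConnSet_boxI x' r) (diamGE_boxI hd x r)
    (diamGE_boxI hd x' r)
  obtain ⟨hconn, ⟨p, hp, hpx⟩, ⟨q, hq, hqx'⟩⟩ := hℬ.2.2
  have hdiam : diamGE (zeroBoxes ℓ₀ L₀ ℬ) ((2 * r : ℕ) : ℝ) := by
    refine diamGE_natCast_iff.2 ⟨p, hp, q, hq, le_trans ?_ (natAbs_sub_le_dinf p q ⟨0, hd⟩)⟩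
    have hp0 := hpx ⟨0, hd⟩
    have hq0 := hqx' ⟨0, hd⟩
    simp only [hx'] at hq0
    omega
  obtain ⟨A, hAℬ, hAp, hA, hAdiam⟩ := hconn.exists_subset_boxI hdiam hp
  refine ⟨ℬ, hℬ.mono subset_rfl (subset_univ _) (subset_univ _), hg, A, hAℬ, hAp.trans ?_, hA,
    hAdiam⟩
  refine boxI_subset_boxI ?_
  rw [mem_boxI_iff] at hpx
  omega

theorem HasBridge.trans_connector (hℬ : Is0Bridge d ℓ₀ L₀ Sg T₁ T₂ ℬ) (hg : ∀ y ∈ ℬ, g y)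
    {A : Set (V d)} (hA : A ⊆ zeroBoxes ℓ₀ L₀ ℬ) (h₁ : HasBridge ℓ₀ L₀ g Sg S₁ A)
    (h₂ : HasBridge ℓ₀ L₀ g Sg A S₂) : HasBridge ℓ₀ L₀ g Sg S₁ S₂ := by
  obtain ⟨ℬ₁, hℬ₁, hg₁⟩ := h₁
  obtain ⟨ℬ₂, hℬ₂, hg₂⟩ := h₂
  obtain ⟨a, haℬ₁, haA⟩ := hℬ₁.2.2.2.2
  obtain ⟨b, hbℬ₂, hbA⟩ := hℬ₂.2.2.2.1
  have hfirst := hℬ₁.union hℬ ⟨a, haℬ₁, hA haA⟩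
  refine ⟨ℬ₁ ∪ ℬ ∪ ℬ₂, hfirst.union hℬ₂ ⟨b, ?_, hbℬ₂⟩, ?_⟩
  · rw [zeroBoxes_union]
    exact Or.inr (hA hbA)
  · simp only [Finset.mem_union]
    rintro y ((hy | hy) | hy)
    exacts [hg₁ y hy, hg y hy, hg₂ y hy]

theorem hasBridge_of_reachableIn (hd : 0 < d) (hs : 5 * r < s) {W : Set (V d)}
    (hlink : ∀ w ∈ W, LinksAt ℓ₀ L₀ g r s R w) (hsub : ∀ w ∈ W, boxI w R ⊆ Sg) (hx : x ∈ W)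
    (hxy : ReachableIn W x y) (h₁ : S₁ ⊆ boxI x s) (hc₁ : IsConnSet S₁) (hd₁ : diamGE S₁ (r : ℝ))
    (h₂ : S₂ ⊆ boxI y s) (hc₂ : IsConnSet S₂) (hd₂ : diamGE S₂ (r : ℝ)) :
    HasBridge ℓ₀ L₀ g Sg S₁ S₂ := by
  induction hxy generalizing S₂ with
  | refl => exact (hlink x hx S₁ S₂ h₁ h₂ hc₁ hc₂ hd₁ hd₂).mono (hsub x hx) subset_rfl subset_rfl
  | @tail b c _ hbc ih =>
    obtain ⟨hadj, -, hc⟩ := hbc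
    obtain ⟨ℬ, hℬ, hg, A, hAℬ, hAc, hA, hAdiam⟩ := (hlink c hc).exists_connector hd hs.le
    have hcb := hadj.symm.dinf_le_one
    refine .trans_connector (hℬ.mono (hsub c hc) subset_rfl subset_rfl) hg hAℬ
      (ih (hAc.trans (boxI_subset_boxI (by omega))) hA hAdiam) ?_
    exact (hlink c hc A S₂ (hAc.trans (boxI_mono (by omega))) h₂ hA hc₂
      hAdiam hd₂).mono (hsub c hc) subset_rfl subset_rfl

theorem hasBridge_of_isConnSet (hd : 0 < d) (hs : 5 * r < s) {W : Set (V d)} (hW : IsConnSet W)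
    (hlink : ∀ w ∈ W, LinksAt ℓ₀ L₀ g r s R w) (hsub : ∀ w ∈ W, boxI w R ⊆ Sg)
    (hc₁ : IsConnSet S₁) (hd₁ : diamGE S₁ ((2 * r : ℕ) : ℝ)) (hW₁ : (S₁ ∩ W).Nonempty)
    (hc₂ : IsConnSet S₂) (hd₂ : diamGE S₂ ((2 * r : ℕ) : ℝ)) (hW₂ : (S₂ ∩ W).Nonempty) :
    HasBridge ℓ₀ L₀ g Sg S₁ S₂ := by
  obtain ⟨p, hp₁, hpW⟩ := hW₁
  obtain ⟨q, hq₂, hqW⟩ := hW₂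
  obtain ⟨A₁, hA₁S, hA₁p, hA₁, hA₁diam⟩ := hc₁.exists_subset_boxI hd₁ hp₁
  obtain ⟨A₂, hA₂S, hA₂q, hA₂, hA₂diam⟩ := hc₂.exists_subset_boxI hd₂ hq₂
  have hrs : ∀ w : V d, boxI w r ⊆ boxI w s := fun w => boxI_mono (by omega)
  exact (hasBridge_of_reachableIn hd hs hlink hsub hpW (isConnSet_iff.1 hW p hpW q hqW)
    (hA₁p.trans (hrs p)) hA₁ hA₁diam (hA₂q.trans (hrs q)) hA₂ hA₂diam).mono subset_rfl hA₁S hA₂S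

end Bridges

/-! ### Linking around a single exceptional box -/

section LinksOffBox

variable {d ℓ₀ L₀ : ℕ} {g : V d → Prop} {S₁ S₂ : Set (V d)} {N : ℕ} {x : V d}

/-- At scale `N` around `x`, some finer-scale linking property holds at every point outside one
small exceptional box: this is the inductive input from which linking at scale `N` is derived. -/
def LinksOffBox (ℓ₀ L₀ : ℕ) (g : V d → Prop) (N : ℕ) (x : V d) : Prop :=
  ∃ (z : V d) (r s R M : ℕ), 5 * r < s ∧ 2 * r ≤ N ∧ 4 * R + 4 * M + 4 ≤ N ∧
    ∀ y ∈ boxI x (9 * N) \ boxI z M, LinksAt ℓ₀ L₀ g r s R y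

theorem exists_mem_notMem_boxI {S : Set (V d)} {M : ℕ} (z : V d)
    (hS : diamGE S ((2 * M + 1 : ℕ) : ℝ)) : ∃ a ∈ S, a ∉ boxI z M := by
  obtain ⟨a, ha, b, hb, hab⟩ := diamGE_natCast_iff.1 hS
  by_contra! hall
  have haz := mem_boxI_iff.1 (hall a ha)
  have hbz := mem_boxI_iff.1 (hall b hb)
  have htri := dinf_triangle a z b
  rw [dinf_comm z b] at htri
  omega

theorem LinksOffBox.linksAt (hd : 3 ≤ d) (h : LinksOffBox ℓ₀ L₀ g N x) :
    LinksAt ℓ₀ L₀ g N (8 * N) (10 * N) x := by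
  obtain ⟨z, r, s, R, M, hs, hr, hN, hlink⟩ := h
  intro S₁ S₂ h₁ h₂ hc₁ hc₂ hd₁ hd₂
  have hmeet : ∀ {S : Set (V d)}, S ⊆ boxI x (8 * N) → diamGE S (N : ℝ) →
      (S ∩ (boxI x (8 * N) \ boxI z M)).Nonempty := fun hSx hS =>
    let ⟨a, ha, haz⟩ := exists_mem_notMem_boxI z (diamGE_natCast_of_le (by omega) hS)
    ⟨a, ha, hSx ha, haz⟩
  have hsub : ∀ w ∈ boxI x (8 * N) \ boxI z M, boxI w R ⊆ boxI x (10 * N) := fun w hw =>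
    boxI_subset_boxI (by have := mem_boxI_iff.1 hw.1; omega)
  refine hasBridge_of_isConnSet (by omega) hs (isConnSet_boxI_diff_boxI hd (by omega))
    (fun w hw => hlink w ⟨boxI_mono (by omega) hw.1, hw.2⟩) hsub
    hc₁ (diamGE_natCast_of_le hr hd₁) (hmeet h₁ hd₁) hc₂ (diamGE_natCast_of_le hr hd₂)
    (hmeet h₂ hd₂)

theorem exists_radius_forall_notMem_boxI (x z : V d) (a M : ℕ) :
    ∃ ρ, a ≤ ρ ∧ ρ ≤ a + 2 * M + 1 ∧ ∀ y, dinf y x = ρ → y ∉ boxI z M := by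
  by_cases h : ∀ y, dinf y x = a → y ∉ boxI z M
  · exact ⟨a, le_rfl, by omega, h⟩
  push Not at h
  obtain ⟨y, hyx, hyz⟩ := h
  refine ⟨a + 2 * M + 1, by omega, le_rfl, fun y' hy'x hy'z => ?_⟩
  rw [mem_boxI_iff] at hyz hy'z
  have hzy := dinf_triangle y' z y
  have hxy := dinf_triangle y' y x
  rw [dinf_comm z y] at hzy
  omega

/-- `S` is connected and joins the box of radius `r` around `x` to the complement of the open box
of radius `R`. -/
def Crosses (x : V d) (r R : ℕ) (S : Set (V d)) : Prop :=
  IsConnSet S ∧ (∃ a ∈ S, dinf a x ≤ r) ∧ ∃ b ∈ S, R ≤ dinf b x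

theorem Crosses.diamGE {S : Set (V d)} {r R m : ℕ} (h : Crosses x r R S) (hm : r + m ≤ R) :
    diamGE S (m : ℝ) := by
  obtain ⟨-, ⟨a, ha, har⟩, b, hb, hbR⟩ := h
  refine diamGE_natCast_iff.2 ⟨b, hb, a, ha, ?_⟩
  have := dinf_triangle b a x
  omega

theorem LinksOffBox.hasBridge_shell (hd : 3 ≤ d) (h : LinksOffBox ℓ₀ L₀ g N x)
    (h₁ : Crosses x (8 * N) (10 * N) S₁) (h₂ : Crosses x (8 * N) (10 * N) S₂) :
    HasBridge ℓ₀ L₀ g (boxI x (9 * N) \ boxI x (17 * N / 2)) S₁ S₂ := by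
  obtain ⟨z, r, s, R, M, hs, hr, hN, hlink⟩ := h
  obtain ⟨ρ, hρ, hρ', havoid⟩ := exists_radius_forall_notMem_boxI x z (17 * N / 2 + R + 1) M
  have hmeet : ∀ {S : Set (V d)}, Crosses x (8 * N) (10 * N) S →
      (S ∩ {y | dinf y x = ρ}).Nonempty := fun hS =>
    let ⟨hconn, ⟨a, ha, hax⟩, b, hb, hbx⟩ := hS
    hconn.exists_dinf_eq ha hb (by omega) (by omega)
  refine hasBridge_of_isConnSet (by omega) hs (isConnSet_setOf_dinf_eq hd x (by omega))
    (fun w hw => hlink w ⟨mem_boxI_iff.2 (by rw [show dinf w x = ρ from hw]; omega), havoid w hw⟩)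
    (fun w (hw : dinf w x = ρ) y hy => ?_) h₁.1 (h₁.diamGE (by omega)) (hmeet h₁)
    h₂.1 (h₂.diamGE (by omega)) (hmeet h₂)
  simp only [Set.mem_sdiff, mem_boxI_iff] at hy ⊢
  have hyx := dinf_triangle y w x
  have hwx := dinf_triangle w y x
  rw [dinf_comm w y] at hwx
  omega

theorem AdmissibleAt.exists_crosses {κ n : ℕ} {S : Set (V d)} (h : AdmissibleAt d ℓ₀ L₀ κ n x S) :
    ∃ A ⊆ S, Crosses x (8 * (κ * Lsc ℓ₀ L₀ n)) (10 * (κ * Lsc ℓ₀ L₀ n)) A := by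
  obtain ⟨hout, y, hy, a, haA, ha⟩ := h
  obtain ⟨b, hbA, -, c, hc, hbc⟩ := hout y hy
  refine ⟨comp S y, comp_subset S y, isConnSet_comp S y, ⟨a, haA, ?_⟩, b, hbA, ?_⟩
  · rw [← mul_assoc]
    exact mem_boxI_iff.1 ha
  · rw [mem_boxI_iff] at hc
    have htri := dinf_triangle c b x
    have hone := hbc.symm.dinf_le_one
    rw [← mul_assoc]
    omega

end LinksOffBox

/-! ### Renormalised lattices -/

section Lattice

variable {d ℓ₀ L₀ κ n : ℕ}

theorem Lsc_zero (ℓ₀ L₀ : ℕ) : Lsc ℓ₀ L₀ 0 = L₀ := by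
  rw [Lsc, pow_zero, one_mul]

theorem Lsc_succ (ℓ₀ L₀ n : ℕ) : Lsc ℓ₀ L₀ (n + 1) = ℓ₀ * Lsc ℓ₀ L₀ n := by
  rw [Lsc, Lsc, pow_succ']
  exact mul_assoc _ _ _

theorem Lsc_pos (hℓ : 0 < ℓ₀) (hL₀ : 0 < L₀) (n : ℕ) : 0 < Lsc ℓ₀ L₀ n :=
  Nat.mul_pos (Nat.pow_pos hℓ) hL₀

theorem Lsc_mono (hℓ : 0 < ℓ₀) (L₀ : ℕ) : Monotone (Lsc ℓ₀ L₀) := fun _ _ h =>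
  Nat.mul_le_mul_right _ (Nat.pow_le_pow_right hℓ h)

/-- The point of `𝕃_n` with integer coordinates `u`. -/
def latticePoint (ℓ₀ L₀ n : ℕ) (u : V d) : V d :=
  (2 * (Lsc ℓ₀ L₀ n : ℤ) + 1) • u

theorem mem_latt_iff {x : V d} : x ∈ latt d ℓ₀ L₀ n ↔ ∃ u, x = latticePoint ℓ₀ L₀ n u := by
  simp only [latt, mem_ofPred_eq, dvd_def, Classical.skolem, funext_iff, latticePoint,
    Pi.smul_apply, smul_eq_mul, Nat.cast_add, Nat.cast_mul, Nat.cast_ofNat, Nat.cast_one]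

theorem dinf_latticePoint (ℓ₀ L₀ n : ℕ) (u v : V d) :
    dinf (latticePoint ℓ₀ L₀ n u) (latticePoint ℓ₀ L₀ n v) =
      (2 * Lsc ℓ₀ L₀ n + 1) * dinf u v := by
  rw [latticePoint, latticePoint, dinf_smul]
  congr 1

/-- The index of the point of `𝕃_n` whose `n`-box contains `x`. -/
def boxIndex (ℓ₀ L₀ n : ℕ) (x : V d) : V d :=
  fun i => (x i + Lsc ℓ₀ L₀ n) / (2 * Lsc ℓ₀ L₀ n + 1)

theorem dinf_latticePoint_boxIndex_le (ℓ₀ L₀ n : ℕ) (x : V d) :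
    dinf x (latticePoint ℓ₀ L₀ n (boxIndex ℓ₀ L₀ n x)) ≤ Lsc ℓ₀ L₀ n := by
  refine dinf_le_iff.2 fun i => ?_
  simp only [latticePoint, boxIndex, Pi.smul_apply, smul_eq_mul]
  have hdiv := Int.mul_ediv_add_emod (x i + Lsc ℓ₀ L₀ n) (2 * Lsc ℓ₀ L₀ n + 1)
  have hnonneg := Int.emod_nonneg (x i + Lsc ℓ₀ L₀ n)
    (show (2 * Lsc ℓ₀ L₀ n + 1 : ℤ) ≠ 0 by omega)
  have hlt := Int.emod_lt_of_pos (x i + Lsc ℓ₀ L₀ n)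
    (show (0 : ℤ) < 2 * Lsc ℓ₀ L₀ n + 1 by omega)
  generalize (2 * (Lsc ℓ₀ L₀ n : ℤ) + 1) * ((x i + Lsc ℓ₀ L₀ n) / (2 * Lsc ℓ₀ L₀ n + 1)) = q at *
  omega

theorem dinf_le_of_dinf_latticePoint_le {u w : V d}
    (h : dinf (latticePoint ℓ₀ L₀ n w) (latticePoint ℓ₀ L₀ n u) ≤ 11 * (κ * Lsc ℓ₀ L₀ n)) :
    dinf w u ≤ 6 * κ := by
  rw [dinf_latticePoint] at h
  nlinarith [Nat.zero_le (κ * Lsc ℓ₀ L₀ n), Nat.zero_le κ]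

theorem HasBridge.of_forall_boxIndex {g : V d → Prop} {Sg S₁ S₂ : Set (V d)} {T : Finset (V d)}
    (hT : IsConnSet (T : Set (V d))) (hSg : ∀ x ∈ T, boxI x (2 * L₀) ⊆ Sg)
    (hg : ∀ x ∈ T, g (latticePoint ℓ₀ L₀ 0 (boxIndex ℓ₀ L₀ 0 x))) (h₁ : (S₁ ∩ T).Nonempty)
    (h₂ : (S₂ ∩ T).Nonempty) : HasBridge ℓ₀ L₀ g Sg S₁ S₂ := by
  let c : V d → V d := fun x => latticePoint ℓ₀ L₀ 0 (boxIndex ℓ₀ L₀ 0 x)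
  have hc : ∀ x, dinf x (c x) ≤ Lsc ℓ₀ L₀ 0 := dinf_latticePoint_boxIndex_le ℓ₀ L₀ 0
  have hcover : ∀ x ∈ T, x ∈ zeroBoxes ℓ₀ L₀ (T.image c) := fun x hx =>
    mem_zeroBoxes (Finset.mem_image_of_mem c hx) (mem_boxI_iff.2 (hc x))
  have hboxes : zeroBoxes ℓ₀ L₀ (T.image c) = ⋃ x ∈ (T : Set (V d)), boxI (c x) (Lsc ℓ₀ L₀ 0) :=
    Finset.set_biUnion_finset_image
  have hconn : IsConnSet (zeroBoxes ℓ₀ L₀ (T.image c)) := by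
    rw [hboxes]
    exact hT.biUnion (fun x _ => isConnSet_boxI _ _) fun x _ => mem_boxI_iff.2 (hc x)
  have hsub : zeroBoxes ℓ₀ L₀ (T.image c) ⊆ Sg := by
    rw [hboxes]
    refine iUnion₂_subset fun x hx => (boxI_subset_boxI ?_).trans (hSg x hx)
    have := hc x
    rw [Lsc_zero] at this ⊢
    rw [dinf_comm]
    omega
  refine ⟨T.image c, ⟨Finset.forall_mem_image.2 fun x _ => mem_latt_iff.2 ⟨_, rfl⟩, hsub, hconn,
    ?_, ?_⟩, Finset.forall_mem_image.2 hg⟩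
  · exact h₁.mono fun x hx => ⟨hcover x hx.2, hx.1⟩
  · exact h₂.mono fun x hx => ⟨hcover x hx.2, hx.1⟩

end Lattice

/-! ### Hierarchical witnesses of badness -/

section Witnesses

variable {d ℓ₀ L₀ κ n : ℕ} {e : ℕ → V d → Prop} {u v : V d} {A : Finset (ℕ × V d)}

/-- Indices of the points of `𝕃_n` used to cover the box of radius `9κL_{n+1}` around the point of
`𝕃_{n+1}` with index `u`. -/
def subIndices (ℓ₀ L₀ κ n : ℕ) (u : V d) : Finset (V d) :=
  boxFinset (boxIndex ℓ₀ L₀ n (latticePoint ℓ₀ L₀ (n + 1) u)) (5 * κ * ℓ₀)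

/-- Pairs of subindices so far apart that badness at one and at the other involve
independent events. -/
def separatedPairs (ℓ₀ L₀ κ n : ℕ) (u : V d) : Finset (V d × V d) :=
  (subIndices ℓ₀ L₀ κ n u ×ˢ subIndices ℓ₀ L₀ κ n u).filter fun p => 20 * κ ≤ dinf p.1 p.2

/-- The sets of labels `(j, w)` such that failure of all the events attached to the lattice points
`latticePoint ℓ₀ L₀ j w` makes the point of `𝕃_n` with index `u` bad: either a single event of
scale `n` near that point, or witnesses of badness for two separated subindices. -/
def witnesses (ℓ₀ L₀ κ : ℕ) : ℕ → V d → Finset (Finset (ℕ × V d))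
  | 0, u => (boxFinset u (6 * κ)).image fun w => {(0, w)}
  | n + 1, u => ((boxFinset u (6 * κ)).image fun w => {(n + 1, w)}) ∪
      (separatedPairs ℓ₀ L₀ κ n u).biUnion fun p =>
        (witnesses ℓ₀ L₀ κ n p.1 ×ˢ witnesses ℓ₀ L₀ κ n p.2).image fun q => q.1 ∪ q.2

theorem mem_witnesses_zero :
    A ∈ witnesses ℓ₀ L₀ κ 0 u ↔ ∃ w, dinf w u ≤ 6 * κ ∧ A = {(0, w)} := by
  simp only [witnesses, Finset.mem_image, mem_boxFinset, eq_comm (a := A)]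

theorem mem_witnesses_succ : A ∈ witnesses ℓ₀ L₀ κ (n + 1) u ↔
    (∃ w, dinf w u ≤ 6 * κ ∧ A = {(n + 1, w)}) ∨
      ∃ v ∈ subIndices ℓ₀ L₀ κ n u, ∃ v' ∈ subIndices ℓ₀ L₀ κ n u, 20 * κ ≤ dinf v v' ∧
        ∃ B ∈ witnesses ℓ₀ L₀ κ n v, ∃ C ∈ witnesses ℓ₀ L₀ κ n v', A = B ∪ C := by
  simp only [witnesses, separatedPairs, Finset.mem_union, Finset.mem_image, mem_boxFinset,
    Finset.mem_biUnion, Finset.mem_filter, Finset.mem_product, Prod.exists, eq_comm (a := A)]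
  grind

theorem singleton_mem_witnesses {w : V d} (hw : dinf w u ≤ 6 * κ) :
    {(n, w)} ∈ witnesses ℓ₀ L₀ κ n u := by
  cases n with
  | zero => exact mem_witnesses_zero.2 ⟨w, hw, rfl⟩
  | succ n => exact mem_witnesses_succ.2 (.inl ⟨w, hw, rfl⟩)

/-- The point of `𝕃_n` with index `u` is bad when, for the configuration `e` of occurring events,
all the events labelled by one of its witnesses fail. -/
def IsBad (ℓ₀ L₀ κ : ℕ) (e : ℕ → V d → Prop) (n : ℕ) (u : V d) : Prop :=
  ∃ A ∈ witnesses ℓ₀ L₀ κ n u, ∀ a ∈ A, ¬ e a.1 (latticePoint ℓ₀ L₀ a.1 a.2)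

theorem apply_of_not_isBad (h : ¬ IsBad ℓ₀ L₀ κ e n u) {y : V d} (hy : y ∈ latt d ℓ₀ L₀ n)
    (hyu : dinf y (latticePoint ℓ₀ L₀ n u) ≤ 11 * (κ * Lsc ℓ₀ L₀ n)) : e n y := by
  obtain ⟨w, rfl⟩ := mem_latt_iff.1 hy
  by_contra hfail
  refine h ⟨{(n, w)}, singleton_mem_witnesses (dinf_le_of_dinf_latticePoint_le hyu), ?_⟩
  simpa using hfail

theorem exists_forall_isBad_dinf_lt (h : ¬ IsBad ℓ₀ L₀ κ e (n + 1) u) :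
    ∃ v₀, ∀ v ∈ subIndices ℓ₀ L₀ κ n u, IsBad ℓ₀ L₀ κ e n v → dinf v v₀ < 20 * κ := by
  by_cases hbad : ∃ v₀ ∈ subIndices ℓ₀ L₀ κ n u, IsBad ℓ₀ L₀ κ e n v₀
  · obtain ⟨v₀, hv₀, C, hC, hCfail⟩ := hbad
    refine ⟨v₀, fun v hv ⟨B, hB, hBfail⟩ => ?_⟩
    by_contra! hfar
    refine h ⟨B ∪ C, mem_witnesses_succ.2 (.inr ⟨v, hv, v₀, hv₀, hfar, B, hB, C, hC, rfl⟩), ?_⟩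
    exact fun a ha => (Finset.mem_union.1 ha).elim (hBfail a) (hCfail a)
  · exact ⟨0, fun v hv hv' => absurd ⟨v, hv, hv'⟩ hbad⟩

/-- All the events at scales `j ≤ n` attached to the `j`-boxes containing `x` occur. -/
def GoodUpTo (ℓ₀ L₀ : ℕ) (e : ℕ → V d → Prop) (n : ℕ) (x : V d) : Prop :=
  ∀ j ≤ n, ∀ y ∈ latt d ℓ₀ L₀ j, x ∈ boxI y (Lsc ℓ₀ L₀ j) → e j y

theorem GoodUpTo.succ {x : V d} (h : GoodUpTo ℓ₀ L₀ e n x)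
    (hsucc : ∀ y ∈ latt d ℓ₀ L₀ (n + 1), x ∈ boxI y (Lsc ℓ₀ L₀ (n + 1)) → e (n + 1) y) :
    GoodUpTo ℓ₀ L₀ e (n + 1) x := fun j hj =>
  (Nat.le_succ_iff.1 hj).elim (h j) fun hj' => hj' ▸ hsucc

theorem linksOffBox_zero (hκ : 20 ≤ κ) (hL₀ : 0 < L₀) (h : ¬ IsBad ℓ₀ L₀ κ e 0 u) :
    LinksOffBox ℓ₀ L₀ (GoodUpTo ℓ₀ L₀ e 0) (κ * Lsc ℓ₀ L₀ 0) (latticePoint ℓ₀ L₀ 0 u) := by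
  have hN : 20 * L₀ ≤ κ * L₀ := Nat.mul_le_mul_right _ hκ
  refine ⟨0, 0, 1, 2 * L₀ + 1, 0, ?_⟩
  simp only [Lsc_zero]
  refine ⟨by omega, by omega, by omega, fun y hy S₁ S₂ h₁ h₂ _ _ hd₁ hd₂ => ?_⟩
  have hT : (boxFinset y 1 : Set (V d)) = boxI y 1 := by
    ext x
    rw [Finset.mem_coe, mem_boxFinset, mem_boxI_iff]
  refine .of_forall_boxIndex (T := boxFinset y 1) (hT ▸ isConnSet_boxI y 1)
    (fun x hx => boxI_subset_boxI (by have := mem_boxFinset.1 hx; omega))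
    (fun x hx j hj t ht hxt => ?_)
    (let ⟨a, ha, _⟩ := hd₁; ⟨a, ha, hT ▸ h₁ ha⟩) (let ⟨a, ha, _⟩ := hd₂; ⟨a, ha, hT ▸ h₂ ha⟩)
  obtain rfl := Nat.le_zero.1 hj
  refine apply_of_not_isBad h ht ?_
  have hyu := mem_boxI_iff.1 hy.1
  have hxy := mem_boxFinset.1 hx
  have hc := dinf_latticePoint_boxIndex_le ℓ₀ L₀ 0 x
  rw [mem_boxI_iff, dinf_comm] at hxt
  rw [dinf_comm] at hc
  rw [Lsc_zero] at *
  set c := latticePoint ℓ₀ L₀ 0 (boxIndex ℓ₀ L₀ 0 x)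
  have htri₁ := dinf_triangle t c (latticePoint ℓ₀ L₀ 0 u)
  have htri₂ := dinf_triangle c x (latticePoint ℓ₀ L₀ 0 u)
  have htri₃ := dinf_triangle x y (latticePoint ℓ₀ L₀ 0 u)
  omega

theorem boxIndex_mem_subIndices (hκ : 0 < κ) (hℓ : 2 ≤ ℓ₀) {y : V d}
    (hy : dinf y (latticePoint ℓ₀ L₀ (n + 1) u) ≤ 9 * (κ * Lsc ℓ₀ L₀ (n + 1))) :
    boxIndex ℓ₀ L₀ n y ∈ subIndices ℓ₀ L₀ κ n u := by
  set x := latticePoint ℓ₀ L₀ (n + 1) u with hx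
  set L := Lsc ℓ₀ L₀ n with hL
  have hxc := dinf_latticePoint_boxIndex_le ℓ₀ L₀ n x
  have hyc := dinf_latticePoint_boxIndex_le ℓ₀ L₀ n y
  have hdist : (2 * L + 1) * dinf (boxIndex ℓ₀ L₀ n y) (boxIndex ℓ₀ L₀ n x) ≤
      9 * (κ * (ℓ₀ * L)) + 2 * L := by
    rw [hL, ← dinf_latticePoint, ← Lsc_succ]
    rw [dinf_comm] at hyc
    have htri := dinf_triangle (latticePoint ℓ₀ L₀ n (boxIndex ℓ₀ L₀ n y)) y
      (latticePoint ℓ₀ L₀ n (boxIndex ℓ₀ L₀ n x))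
    have htri' := dinf_triangle y x (latticePoint ℓ₀ L₀ n (boxIndex ℓ₀ L₀ n x))
    omega
  have hκℓ : 2 ≤ κ * ℓ₀ := hℓ.trans (Nat.le_mul_of_pos_left ℓ₀ hκ)
  rw [subIndices, mem_boxFinset, ← hx]
  refine Nat.le_of_mul_le_mul_left (hdist.trans ?_) (show 0 < 2 * L + 1 by omega)
  nlinarith [Nat.mul_le_mul_right L hκℓ]

theorem dinf_latticePoint_le_of_dinf_boxIndex_lt (hκ : 0 < κ) {y v₀ : V d} (hL : 0 < Lsc ℓ₀ L₀ n)
    (hlt : dinf (boxIndex ℓ₀ L₀ n y) v₀ < 20 * κ) :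
    dinf y (latticePoint ℓ₀ L₀ n v₀) ≤ 61 * (κ * Lsc ℓ₀ L₀ n) := by
  have hyc := dinf_latticePoint_boxIndex_le ℓ₀ L₀ n y
  have htri := dinf_triangle y (latticePoint ℓ₀ L₀ n (boxIndex ℓ₀ L₀ n y))
    (latticePoint ℓ₀ L₀ n v₀)
  rw [dinf_latticePoint] at htri
  nlinarith [Nat.mul_le_mul_left (2 * Lsc ℓ₀ L₀ n + 1) hlt.le, Nat.mul_le_mul_left κ hL,
    Nat.mul_le_mul_right (Lsc ℓ₀ L₀ n) hκ]

theorem linksOffBox_succ (hd : 3 ≤ d) (hκ : 20 ≤ κ) (hℓ : 1000 ≤ ℓ₀) (hL₀ : 0 < L₀)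
    (ih : ∀ v : V d, ¬ IsBad ℓ₀ L₀ κ e n v →
      LinksOffBox ℓ₀ L₀ (GoodUpTo ℓ₀ L₀ e n) (κ * Lsc ℓ₀ L₀ n) (latticePoint ℓ₀ L₀ n v))
    (h : ¬ IsBad ℓ₀ L₀ κ e (n + 1) u) :
    LinksOffBox ℓ₀ L₀ (GoodUpTo ℓ₀ L₀ e (n + 1)) (κ * Lsc ℓ₀ L₀ (n + 1))
      (latticePoint ℓ₀ L₀ (n + 1) u) := by
  have hL : 0 < Lsc ℓ₀ L₀ n := Lsc_pos (by omega) hL₀ n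
  have hLN : 20 * Lsc ℓ₀ L₀ n ≤ κ * Lsc ℓ₀ L₀ n := Nat.mul_le_mul_right _ hκ
  have hLN' : 20 * Lsc ℓ₀ L₀ (n + 1) ≤ κ * Lsc ℓ₀ L₀ (n + 1) := Nat.mul_le_mul_right _ hκ
  have hNN' : 1000 * (κ * Lsc ℓ₀ L₀ n) ≤ κ * Lsc ℓ₀ L₀ (n + 1) := by
    rw [Lsc_succ, mul_left_comm κ]
    exact Nat.mul_le_mul_right _ hℓ
  obtain ⟨v₀, hv₀⟩ := exists_forall_isBad_dinf_lt h
  refine ⟨latticePoint ℓ₀ L₀ n v₀, κ * Lsc ℓ₀ L₀ n, 7 * (κ * Lsc ℓ₀ L₀ n), 11 * (κ * Lsc ℓ₀ L₀ n),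
    61 * (κ * Lsc ℓ₀ L₀ n), by omega, by omega, by omega, fun y hy => ?_⟩
  rw [Set.mem_sdiff, mem_boxI_iff, mem_boxI_iff] at hy
  obtain ⟨hyu, hyv₀⟩ := hy
  have hgood : ¬ IsBad ℓ₀ L₀ κ e n (boxIndex ℓ₀ L₀ n y) := fun hbad =>
    hyv₀ (dinf_latticePoint_le_of_dinf_boxIndex_lt (by omega) hL
      (hv₀ _ (boxIndex_mem_subIndices (by omega) (by omega) hyu) hbad))
  have hyc := dinf_latticePoint_boxIndex_le ℓ₀ L₀ n y
  have hlink : LinksAt ℓ₀ L₀ (GoodUpTo ℓ₀ L₀ e n) (κ * Lsc ℓ₀ L₀ n) (7 * (κ * Lsc ℓ₀ L₀ n))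
      (11 * (κ * Lsc ℓ₀ L₀ n)) y :=
    ((ih _ hgood).linksAt hd).of_dinf_le (by omega) (by rw [dinf_comm]; omega)
  refine hlink.imp fun x hx hgx => hgx.succ fun t ht hxt => apply_of_not_isBad h ht ?_
  rw [mem_boxI_iff] at hx hxt
  rw [dinf_comm] at hxt
  have htri := dinf_triangle t x (latticePoint ℓ₀ L₀ (n + 1) u)
  have htri' := dinf_triangle x y (latticePoint ℓ₀ L₀ (n + 1) u)
  omega

theorem linksOffBox_of_not_isBad (hd : 3 ≤ d) (hκ : 20 ≤ κ) (hℓ : 1000 ≤ ℓ₀) (hL₀ : 0 < L₀)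
    (h : ¬ IsBad ℓ₀ L₀ κ e n u) :
    LinksOffBox ℓ₀ L₀ (GoodUpTo ℓ₀ L₀ e n) (κ * Lsc ℓ₀ L₀ n) (latticePoint ℓ₀ L₀ n u) := by
  induction n generalizing u with
  | zero => exact linksOffBox_zero hκ hL₀ h
  | succ n ih => exact linksOffBox_succ hd hκ hℓ hL₀ (fun v => ih) h

theorem dinf_latticePoint_le_of_mem_subIndices (hv : v ∈ subIndices ℓ₀ L₀ κ n u) :
    dinf (latticePoint ℓ₀ L₀ n v) (latticePoint ℓ₀ L₀ (n + 1) u) ≤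
      (2 * Lsc ℓ₀ L₀ n + 1) * (5 * κ * ℓ₀) + Lsc ℓ₀ L₀ n := by
  rw [subIndices, mem_boxFinset] at hv
  have hc := dinf_latticePoint_boxIndex_le ℓ₀ L₀ n (latticePoint ℓ₀ L₀ (n + 1) u)
  rw [dinf_comm] at hc
  refine (dinf_triangle _ _ _).trans (add_le_add ?_ hc)
  rw [dinf_latticePoint]
  exact Nat.mul_le_mul_left _ hv

theorem dinf_latticePoint_le_of_mem_witnesses (hκ : 0 < κ) (hℓ : 7 ≤ ℓ₀) (hL₀ : 0 < L₀)
    (hA : A ∈ witnesses ℓ₀ L₀ κ n u) {a : ℕ × V d} (ha : a ∈ A) : a.1 ≤ n ∧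
      dinf (latticePoint ℓ₀ L₀ a.1 a.2) (latticePoint ℓ₀ L₀ n u) ≤
        (2 * Lsc ℓ₀ L₀ n + 1) * (9 * κ) := by
  have hnear : ∀ {m : ℕ} {w u : V d}, dinf w u ≤ 6 * κ →
      dinf (latticePoint ℓ₀ L₀ m w) (latticePoint ℓ₀ L₀ m u) ≤
        (2 * Lsc ℓ₀ L₀ m + 1) * (9 * κ) := fun hw => by
    rw [dinf_latticePoint]
    exact Nat.mul_le_mul_left _ (by omega)
  induction n generalizing u A with
  | zero =>
    obtain ⟨w, hw, rfl⟩ := mem_witnesses_zero.1 hA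
    obtain rfl := Finset.mem_singleton.1 ha
    exact ⟨le_rfl, hnear hw⟩
  | succ n ih =>
    obtain ⟨w, hw, rfl⟩ | ⟨v, hv, v', hv', -, B, hB, C, hC, rfl⟩ := mem_witnesses_succ.1 hA
    · obtain rfl := Finset.mem_singleton.1 ha
      exact ⟨le_rfl, hnear hw⟩
    obtain ⟨v'', hv'', han, hav''⟩ : ∃ v'' ∈ subIndices ℓ₀ L₀ κ n u, a.1 ≤ n ∧
        dinf (latticePoint ℓ₀ L₀ a.1 a.2) (latticePoint ℓ₀ L₀ n v'') ≤
          (2 * Lsc ℓ₀ L₀ n + 1) * (9 * κ) :=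
      (Finset.mem_union.1 ha).elim (fun ha => ⟨v, hv, ih hB ha⟩) fun ha => ⟨v', hv', ih hC ha⟩
    refine ⟨by omega, ((dinf_triangle _ _ _).trans
      (add_le_add hav'' (dinf_latticePoint_le_of_mem_subIndices hv''))).trans ?_⟩
    have hL := Lsc_pos (by omega : 0 < ℓ₀) hL₀ n
    rw [Lsc_succ]
    generalize Lsc ℓ₀ L₀ n = L at *
    have hκL : 1 ≤ κ * L := Nat.mul_pos hκ hL
    nlinarith [Nat.mul_le_mul_left (κ * L) hℓ, Nat.mul_le_mul_left (κ * ℓ₀) hL,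
      Nat.mul_le_mul_right L hκ]

theorem le_dinf_of_mem_witnesses (hκ : 0 < κ) (hℓ : 7 ≤ ℓ₀) (hL₀ : 0 < L₀)
    (huv : 20 * κ ≤ dinf u v) (hA : A ∈ witnesses ℓ₀ L₀ κ n u) {B : Finset (ℕ × V d)}
    (hB : B ∈ witnesses ℓ₀ L₀ κ n v) {a b : ℕ × V d} (ha : a ∈ A) (hb : b ∈ B)
    (hab : a.1 = b.1) : κ ≤ dinf a.2 b.2 := by
  obtain ⟨han, hau⟩ := dinf_latticePoint_le_of_mem_witnesses hκ hℓ hL₀ hA ha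
  obtain ⟨-, hbv⟩ := dinf_latticePoint_le_of_mem_witnesses hκ hℓ hL₀ hB hb
  obtain ⟨m, w⟩ := a
  obtain ⟨m', w'⟩ := b
  obtain rfl : m = m' := hab
  have htri := dinf_triangle (latticePoint ℓ₀ L₀ n u) (latticePoint ℓ₀ L₀ m w)
    (latticePoint ℓ₀ L₀ n v)
  have htri' := dinf_triangle (latticePoint ℓ₀ L₀ m w) (latticePoint ℓ₀ L₀ m w')
    (latticePoint ℓ₀ L₀ n v)
  rw [dinf_comm] at hau
  simp only [dinf_latticePoint] at htri htri' hau hbv ⊢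
  have hLm := Lsc_mono (by omega : 0 < ℓ₀) L₀ han
  simp only at hLm
  by_contra! hlt
  nlinarith [Nat.mul_le_mul_left (2 * Lsc ℓ₀ L₀ n + 1) huv,
    Nat.mul_le_mul (show 2 * Lsc ℓ₀ L₀ m + 1 ≤ 2 * Lsc ℓ₀ L₀ n + 1 by omega) hlt.le]

theorem pairwise_le_dinf_of_mem_witnesses (hκ : 0 < κ) (hℓ : 7 ≤ ℓ₀) (hL₀ : 0 < L₀)
    (hA : A ∈ witnesses ℓ₀ L₀ κ n u) {a b : ℕ × V d} (ha : a ∈ A) (hb : b ∈ A) (hne : a ≠ b)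
    (hab : a.1 = b.1) : κ ≤ dinf a.2 b.2 := by
  have hsingle : ∀ {c : ℕ × V d}, a ∈ ({c} : Finset _) → b ∈ ({c} : Finset _) →
      κ ≤ dinf a.2 b.2 := fun ha hb =>
    absurd ((Finset.mem_singleton.1 ha).trans (Finset.mem_singleton.1 hb).symm) hne
  induction n generalizing u A with
  | zero =>
    obtain ⟨w, -, rfl⟩ := mem_witnesses_zero.1 hA
    exact hsingle ha hb
  | succ n ih =>
    obtain ⟨w, -, rfl⟩ | ⟨v, -, v', -, hfar, B, hB, C, hC, rfl⟩ := mem_witnesses_succ.1 hA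
    · exact hsingle ha hb
    rcases Finset.mem_union.1 ha with ha | ha <;> rcases Finset.mem_union.1 hb with hb | hb
    · exact ih hB ha hb
    · exact le_dinf_of_mem_witnesses hκ hℓ hL₀ hfar hB hC ha hb hab
    · rw [dinf_comm]
      exact le_dinf_of_mem_witnesses hκ hℓ hL₀ hfar hB hC hb ha hab.symm
    · exact ih hC ha hb

theorem disjoint_of_mem_witnesses (hκ : 0 < κ) (hℓ : 7 ≤ ℓ₀) (hL₀ : 0 < L₀)
    (huv : 20 * κ ≤ dinf u v) (hA : A ∈ witnesses ℓ₀ L₀ κ n u) {B : Finset (ℕ × V d)}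
    (hB : B ∈ witnesses ℓ₀ L₀ κ n v) : Disjoint A B :=
  Finset.disjoint_left.2 fun a ha hb => by
    have := le_dinf_of_mem_witnesses hκ hℓ hL₀ huv hA hB ha hb rfl
    rw [dinf_self] at this
    omega

end Witnesses

/-! ### The probability of a bad point -/

section Independence

variable {Ω : Type*} [MeasurableSpace Ω] {P : Measure Ω}

theorem measure_biInter_compl_of_iIndepSet {α : Type*} {S : Finset α} {s : α → Set Ω}
    (h : iIndepSet (fun a : S => s a) P) : P (⋂ a ∈ S, (s a)ᶜ) = ∏ a ∈ S, P (s a)ᶜ := by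
  have hprod := iIndep.meas_iInter (s := fun a : S => (s a)ᶜ) h fun a =>
    (MeasurableSpace.measurableSet_generateFrom (mem_singleton _)).compl
  rw [← Finset.prod_coe_sort S fun a => P (s a)ᶜ, ← hprod]
  exact congrArg P (biInter_eq_iInter (S : Set α) fun a _ => (s a)ᶜ)

theorem measure_biInter_of_iIndep_fiberwise {α ι : Type*} [DecidableEq ι]
    {m : ι → MeasurableSpace Ω} (hm : iIndep m P) (g : α → ι) {A : Finset α} {s : α → Set Ω}
    (hs : ∀ a ∈ A, MeasurableSet[m (g a)] (s a))
    (hfiber : ∀ i, P (⋂ a ∈ A.filter (g · = i), s a) = ∏ a ∈ A with g a = i, P (s a)) :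
    P (⋂ a ∈ A, s a) = ∏ a ∈ A, P (s a) := by
  have hmaps : ∀ a ∈ A, g a ∈ A.image g := fun a => Finset.mem_image_of_mem g
  have hInter : ⋂ a ∈ A, s a = ⋂ i ∈ A.image g, ⋂ a ∈ A.filter (g · = i), s a := by
    ext ω
    simp only [mem_iInter, Finset.mem_filter]
    exact ⟨fun h i _ a ha => h a ha.1, fun h a ha => h (g a) (hmaps a ha) a ⟨ha, rfl⟩⟩
  have hmeas : ∀ i ∈ A.image g, MeasurableSet[m i] (⋂ a ∈ A.filter (g · = i), s a) :=
    fun i _ => Finset.measurableSet_biInter _ fun a ha => by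
      obtain ⟨haA, rfl⟩ := Finset.mem_filter.1 ha
      exact hs a haA
  rw [hInter, hm.meas_biInter hmeas, Finset.prod_congr rfl fun i _ => hfiber i,
    Finset.prod_fiberwise_of_maps_to hmaps]

variable {d ℓ₀ L₀ κ : ℕ} {F : V d → Set Ω} {H : ℕ → V d → Set Ω}

/-- The families `F, H₁, H₂, …` as a single family indexed by the scale. -/
def scaleEvent {Ω : Type*} (F : V d → Set Ω) (H : ℕ → V d → Set Ω) : ℕ → V d → Set Ω
  | 0 => F
  | j + 1 => H (j + 1)

/-- The configuration of the events that occur at the outcome `ω`. -/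
def occurs {Ω : Type*} (F : V d → Set Ω) (H : ℕ → V d → Set Ω) (ω : Ω) (j : ℕ) (y : V d) : Prop :=
  ω ∈ scaleEvent F H j y

theorem CondC1.iIndep_scaleEvent (h : CondC1 d ℓ₀ L₀ P F H) :
    iIndep (fun j => MeasurableSpace.generateFrom
      (range fun w => scaleEvent F H j (latticePoint ℓ₀ L₀ j w))) P := by
  have hgen : ∀ j, (range fun w => scaleEvent F H j (latticePoint ℓ₀ L₀ j w)) =
      if j = 0 then {A | ∃ x ∈ latt d ℓ₀ L₀ 0, A = F x}
      else {A | ∃ x ∈ latt d ℓ₀ L₀ j, A = H j x} := fun j => by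
    ext A
    cases j <;> simp [scaleEvent, mem_latt_iff, eq_comm]
  simp only [hgen]
  exact h

theorem CondC2.iIndepSet_scaleEvent (h : CondC2 d ℓ₀ L₀ κ P F H) (j : ℕ) {U : Finset (V d)}
    (hU : ∀ u ∈ U, ∀ v ∈ U, u ≠ v → κ ≤ dinf u v) :
    iIndepSet (fun u : U => scaleEvent F H j (latticePoint ℓ₀ L₀ j u)) P := by
  obtain ⟨hF, hH⟩ := h U fun u hu v hv huv => (hU u hu v hv huv).trans (by omega)
  cases j with
  | zero => exact hF
  | succ j => exact hH (j + 1) (by omega)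

theorem measure_biInter_compl_scaleEvent (h₁ : CondC1 d ℓ₀ L₀ P F H)
    (h₂ : CondC2 d ℓ₀ L₀ κ P F H) {A : Finset (ℕ × V d)}
    (hA : ∀ a ∈ A, ∀ b ∈ A, a ≠ b → a.1 = b.1 → κ ≤ dinf a.2 b.2) :
    P (⋂ a ∈ A, (scaleEvent F H a.1 (latticePoint ℓ₀ L₀ a.1 a.2))ᶜ) =
      ∏ a ∈ A, P (scaleEvent F H a.1 (latticePoint ℓ₀ L₀ a.1 a.2))ᶜ := by
  refine measure_biInter_of_iIndep_fiberwise h₁.iIndep_scaleEvent Prod.fst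
    (fun a _ => (MeasurableSpace.measurableSet_generateFrom (mem_range_self a.2)).compl)
    fun j => measure_biInter_compl_of_iIndepSet ?_
  set Aj := A.filter (Prod.fst · = j)
  have hAj : ∀ a ∈ Aj, a ∈ A ∧ a.1 = j := fun a ha => Finset.mem_filter.1 ha
  have hinj : Function.Injective fun a : Aj =>
      (⟨a.1.2, Finset.mem_image_of_mem Prod.snd a.2⟩ : Aj.image Prod.snd) := fun a b hab =>
    Subtype.ext (Prod.ext ((hAj a a.2).2.trans (hAj b b.2).2.symm) (congrArg Subtype.val hab))
  have hsep : ∀ u ∈ Aj.image Prod.snd, ∀ v ∈ Aj.image Prod.snd, u ≠ v → κ ≤ dinf u v := by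
    simp only [Finset.forall_mem_image]
    exact fun a ha b hb hne => hA a (hAj a ha).1 b (hAj b hb).1 (fun hab => hne (hab ▸ rfl))
      ((hAj a ha).2.trans (hAj b hb).2.symm)
  convert (h₂.iIndepSet_scaleEvent j hsep).precomp hinj using 2 with a
  simp only [Function.comp_apply, (hAj a a.2).2]

end Independence

section UnionBound

variable {d ℓ₀ L₀ κ : ℕ} {p b : ℕ → ENNReal}

/-- The number of events of scale `n` whose failure alone makes a point of `𝕃_n` bad. -/
def nearbyCard (d κ : ℕ) : ℕ := (2 * (6 * κ) + 1) ^ d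

/-- The number of pairs of subindices of a point. -/
def pairsCard (d ℓ₀ κ : ℕ) : ℕ := ((2 * (5 * κ * ℓ₀) + 1) ^ d) ^ 2

theorem card_separatedPairs_le (L₀ n : ℕ) (u : V d) :
    (separatedPairs ℓ₀ L₀ κ n u).card ≤ pairsCard d ℓ₀ κ := by
  refine (Finset.card_filter_le _ _).trans_eq ?_
  rw [Finset.card_product, subIndices, card_boxFinset, ← sq, pairsCard]

theorem sum_union_le {β : Type*} [DecidableEq β] (s t : Finset β) (f : β → ENNReal) :
    ∑ b ∈ s ∪ t, f b ≤ ∑ b ∈ s, f b + ∑ b ∈ t, f b := by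
  rw [← Finset.sum_union_inter]
  exact le_self_add

theorem sum_biUnion_le {α β : Type*} [DecidableEq β] (s : Finset α) (t : α → Finset β)
    (f : β → ENNReal) : ∑ b ∈ s.biUnion t, f b ≤ ∑ a ∈ s, ∑ b ∈ t a, f b := by
  classical
  induction s using Finset.induction_on with
  | empty => simp
  | insert a s ha ih =>
    rw [Finset.biUnion_insert, Finset.sum_insert ha]
    exact (sum_union_le _ _ f).trans (by gcongr)

theorem sum_prod_singleton_le (p : ℕ → ENNReal) (n : ℕ) (u : V d) :
    ∑ A ∈ (boxFinset u (6 * κ)).image (fun w => ({(n, w)} : Finset (ℕ × V d))), ∏ a ∈ A, p a.1 ≤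
      nearbyCard d κ * p n := by
  refine (Finset.sum_image_le_of_nonneg fun _ _ => zero_le).trans_eq ?_
  simp only [Finset.prod_singleton, Finset.sum_const, card_boxFinset, nsmul_eq_mul, nearbyCard]

theorem sum_prod_union_le (hκ : 0 < κ) (hℓ : 7 ≤ ℓ₀) (hL₀ : 0 < L₀) (p : ℕ → ENNReal) {n : ℕ}
    {u v : V d} (huv : 20 * κ ≤ dinf u v) :
    ∑ A ∈ (witnesses ℓ₀ L₀ κ n u ×ˢ witnesses ℓ₀ L₀ κ n v).image (fun q => q.1 ∪ q.2),
        ∏ a ∈ A, p a.1 ≤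
      (∑ A ∈ witnesses ℓ₀ L₀ κ n u, ∏ a ∈ A, p a.1) *
        ∑ B ∈ witnesses ℓ₀ L₀ κ n v, ∏ b ∈ B, p b.1 := by
  refine (Finset.sum_image_le_of_nonneg fun _ _ => zero_le).trans_eq ?_
  rw [Finset.sum_mul_sum, ← Finset.sum_product']
  refine Finset.sum_congr rfl fun q hq => Finset.prod_union ?_
  obtain ⟨hA, hB⟩ := Finset.mem_product.1 hq
  exact disjoint_of_mem_witnesses hκ hℓ hL₀ huv hA hB

theorem sum_prod_witnesses_le (hκ : 0 < κ) (hℓ : 7 ≤ ℓ₀) (hL₀ : 0 < L₀)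
    (hzero : nearbyCard d κ * p 0 ≤ b 0)
    (hsucc : ∀ n, nearbyCard d κ * p (n + 1) + pairsCard d ℓ₀ κ * (b n * b n) ≤ b (n + 1))
    (n : ℕ) (u : V d) : ∑ A ∈ witnesses ℓ₀ L₀ κ n u, ∏ a ∈ A, p a.1 ≤ b n := by
  induction n generalizing u with
  | zero => exact (sum_prod_singleton_le p 0 u).trans hzero
  | succ n ih =>
    refine (sum_union_le _ _ _).trans (le_trans ?_ (hsucc n))
    refine add_le_add (sum_prod_singleton_le p (n + 1) u) ((sum_biUnion_le _ _ _).trans ?_)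
    refine (Finset.sum_le_card_nsmul _ _ (b n * b n) fun q hq => ?_).trans ?_
    · exact (sum_prod_union_le hκ hℓ hL₀ p (Finset.mem_filter.1 hq).2).trans
        (mul_le_mul' (ih _) (ih _))
    · rw [nsmul_eq_mul]
      gcongr
      exact card_separatedPairs_le L₀ n u

variable {Ω : Type*} [MeasurableSpace Ω] {P : Measure Ω} {F : V d → Set Ω} {H : ℕ → V d → Set Ω}

theorem measure_isBad_le (hκ : 0 < κ) (hℓ : 7 ≤ ℓ₀) (hL₀ : 0 < L₀) (h₁ : CondC1 d ℓ₀ L₀ P F H)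
    (h₂ : CondC2 d ℓ₀ L₀ κ P F H)
    (hp : ∀ j w, P (scaleEvent F H j (latticePoint ℓ₀ L₀ j w))ᶜ ≤ p j) (n : ℕ) (u : V d) :
    P {ω | IsBad ℓ₀ L₀ κ (occurs F H ω) n u} ≤
      ∑ A ∈ witnesses ℓ₀ L₀ κ n u, ∏ a ∈ A, p a.1 := by
  have hbad : {ω | IsBad ℓ₀ L₀ κ (occurs F H ω) n u} = ⋃ A ∈ witnesses ℓ₀ L₀ κ n u,
      ⋂ a ∈ A, (scaleEvent F H a.1 (latticePoint ℓ₀ L₀ a.1 a.2))ᶜ := by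
    ext ω
    simp only [IsBad, occurs, mem_ofPred_eq, mem_iUnion, mem_iInter, mem_compl_iff, exists_prop]
  rw [hbad]
  refine (measure_biUnion_finset_le _ _).trans (Finset.sum_le_sum fun A hA => ?_)
  rw [measure_biInter_compl_scaleEvent h₁ h₂ fun a ha b hb =>
    pairwise_le_dinf_of_mem_witnesses hκ hℓ hL₀ hA ha hb]
  exact Finset.prod_le_prod' fun a _ => hp a.1 a.2

end UnionBound

/-! ### Favourable configurations -/

section Favourable

variable {d ℓ₀ L₀ κ n : ℕ} {e : ℕ → V d → Prop}

/-- The configuration `e` is favourable at scale `n` when the origin is not bad at scale `n` and no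
event of a larger scale fails near the origin. -/
def Favourable (ℓ₀ L₀ κ : ℕ) (e : ℕ → V d → Prop) (n : ℕ) : Prop :=
  ¬ IsBad ℓ₀ L₀ κ e n 0 ∧
    ∀ j > n, ∀ w ∈ boxFinset (0 : V d) (6 * κ), e j (latticePoint ℓ₀ L₀ j w)

theorem latticePoint_zero (ℓ₀ L₀ n : ℕ) : latticePoint ℓ₀ L₀ n (0 : V d) = 0 :=
  smul_zero _

theorem Favourable.linksOffBox (hd : 3 ≤ d) (hκ : 20 ≤ κ) (hℓ : 1000 ≤ ℓ₀) (hL₀ : 0 < L₀)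
    (h : Favourable ℓ₀ L₀ κ e n) :
    LinksOffBox ℓ₀ L₀ (GoodUpTo ℓ₀ L₀ e n) (κ * Lsc ℓ₀ L₀ n) 0 :=
  latticePoint_zero (d := d) ℓ₀ L₀ n ▸ linksOffBox_of_not_isBad hd hκ hℓ hL₀ h.1

theorem Favourable.goodUpTo (hκ : 0 < κ) (hℓ : 0 < ℓ₀) (h : Favourable ℓ₀ L₀ κ e n) {x : V d}
    (hx : x ∈ boxI 0 (10 * (κ * Lsc ℓ₀ L₀ n))) (hgood : GoodUpTo ℓ₀ L₀ e n x) (m : ℕ) :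
    GoodUpTo ℓ₀ L₀ e m x := fun j _ y hy hxy => by
  rcases le_or_gt j n with hjn | hnj
  · exact hgood j hjn y hy hxy
  obtain ⟨w, rfl⟩ := mem_latt_iff.1 hy
  refine h.2 j hnj w (mem_boxFinset.2 (dinf_le_of_dinf_latticePoint_le (L₀ := L₀) (ℓ₀ := ℓ₀)
    (n := j) ?_))
  rw [latticePoint_zero]
  rw [mem_boxI_iff] at hx hxy
  rw [dinf_comm] at hxy
  have htri := dinf_triangle (latticePoint ℓ₀ L₀ j w) x 0
  have hscale := Nat.mul_le_mul_left κ (Lsc_mono hℓ L₀ hnj.le)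
  have hκj := Nat.le_mul_of_pos_left (Lsc ℓ₀ L₀ j) hκ
  omega

variable {Ω : Type*} {F : V d → Set Ω} {H : ℕ → V d → Set Ω} {ω : Ω}

theorem Favourable.exists_good0 (hκ : 0 < κ) (hℓ : 0 < ℓ₀)
    (h : Favourable ℓ₀ L₀ κ (occurs F H ω) n) {Sg S₁ S₂ : Set (V d)}
    (hSg : Sg ⊆ boxI 0 (10 * (κ * Lsc ℓ₀ L₀ n)))
    (hbridge : HasBridge ℓ₀ L₀ (GoodUpTo ℓ₀ L₀ (occurs F H ω) n) Sg S₁ S₂) :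
    ∃ ℬ, Is0Bridge d ℓ₀ L₀ Sg S₁ S₂ ℬ ∧ Good0 d ℓ₀ L₀ F H ℬ ω := by
  refine hbridge.imp fun x hx hxSg hgood => ?_
  have hall := h.goodUpTo hκ hℓ (hSg hxSg) hgood
  refine ⟨hall 0 0 le_rfl x hx (self_mem_boxI x _), fun j hj => ?_⟩
  obtain ⟨j, rfl⟩ := Nat.exists_eq_add_of_le' hj
  exact hall _ _ le_rfl

theorem Favourable.mem_G0EventI (hd : 3 ≤ d) (hκ : 20 ≤ κ) (hℓ : 1000 ≤ ℓ₀) (hL₀ : 0 < L₀)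
    (h : Favourable ℓ₀ L₀ κ (occurs F H ω) n) : ω ∈ G0EventI d ℓ₀ L₀ κ F H n := by
  intro S₁ S₂ _ _ hS₁ hS₂
  obtain ⟨A₁, hA₁, hcross₁⟩ := hS₁.exists_crosses
  obtain ⟨A₂, hA₂, hcross₂⟩ := hS₂.exists_crosses
  have hbridge := (h.linksOffBox hd hκ hℓ hL₀).hasBridge_shell hd hcross₁ hcross₂
  rw [SgAt, mul_assoc, mul_assoc]
  exact h.exists_good0 (by omega) (by omega) (sdiff_subset.trans (boxI_mono (by omega)))
    (hbridge.mono subset_rfl hA₁ hA₂)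

theorem Favourable.mem_G0EventII (hd : 3 ≤ d) (hκ : 20 ≤ κ) (hℓ : 1000 ≤ ℓ₀) (hL₀ : 0 < L₀)
    (h : Favourable ℓ₀ L₀ κ (occurs F H ω) n) : ω ∈ G0EventII d ℓ₀ L₀ κ F H n := by
  intro S₁ S₂ h₁ h₂ hc₁ hc₂ hd₁ hd₂
  rw [mul_assoc] at h₁ h₂ ⊢
  exact h.exists_good0 (by omega) (by omega) subset_rfl
    ((h.linksOffBox hd hκ hℓ hL₀).linksAt hd S₁ S₂ h₁ h₂ hc₁ hc₂ hd₁ hd₂)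

variable [MeasurableSpace Ω] {P : Measure Ω} {p : ℕ → ENNReal}

theorem measure_not_favourable_le
    (hp : ∀ j w, P (scaleEvent F H j (latticePoint ℓ₀ L₀ j w))ᶜ ≤ p j) (n : ℕ) :
    P {ω | ¬ Favourable ℓ₀ L₀ κ (occurs F H ω) n} ≤
      P {ω | IsBad ℓ₀ L₀ κ (occurs F H ω) n 0} + ∑' k, nearbyCard d κ * p (n + 1 + k) := by
  have hcover : {ω | ¬ Favourable ℓ₀ L₀ κ (occurs F H ω) n} ⊆
      {ω | IsBad ℓ₀ L₀ κ (occurs F H ω) n 0} ∪ ⋃ k, ⋃ w ∈ boxFinset (0 : V d) (6 * κ),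
        (scaleEvent F H (n + 1 + k) (latticePoint ℓ₀ L₀ (n + 1 + k) w))ᶜ := by
    intro ω hω
    by_contra! hout
    simp only [mem_union, mem_ofPred_eq, mem_iUnion, not_or, not_exists] at hout
    refine hω ⟨hout.1, fun j hj w hw => ?_⟩
    obtain ⟨k, rfl⟩ := Nat.exists_eq_add_of_lt hj
    exact not_not.1 (add_right_comm n k 1 ▸ hout.2 k w hw)
  refine (measure_mono hcover).trans ((measure_union_le _ _).trans (add_le_add_right ?_ _))
  refine (measure_iUnion_le _).trans (ENNReal.tsum_le_tsum fun k => ?_)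
  refine (measure_biUnion_finset_le _ _).trans
    ((Finset.sum_le_card_nsmul _ _ _ fun w _ => hp _ w).trans_eq ?_)
  rw [nsmul_eq_mul, card_boxFinset, nearbyCard]

end Favourable

/-! ### Summing over scales -/

section Numerics

theorem half_pow_two_pow_add_le (n k : ℕ) :
    (1 / 2 : ENNReal) ^ 2 ^ (n + 1 + k) ≤ (1 / 2) ^ 2 ^ n * (1 / 2) ^ (k + 1) := by
  rw [← pow_add]
  refine pow_le_pow_right_of_le_one' (by simp) ?_
  have hk : k + 1 < 2 ^ (k + 1) := Nat.lt_two_pow_self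
  have hn : 0 < 2 ^ n := Nat.two_pow_pos n
  rw [add_assoc n, add_comm 1, pow_add]
  nlinarith

theorem tsum_half_pow_two_pow_le (n : ℕ) :
    ∑' k, (1 / 2 : ENNReal) ^ 2 ^ (n + 1 + k) ≤ (1 / 2) ^ 2 ^ n := by
  refine (ENNReal.tsum_le_tsum (half_pow_two_pow_add_le n)).trans_eq ?_
  rw [ENNReal.tsum_mul_left, ENNReal.tsum_geometric_add_one, one_div, ENNReal.one_sub_inv_two,
    inv_inv, ENNReal.inv_mul_cancel two_ne_zero ENNReal.ofNat_ne_top, mul_one]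

theorem ofReal_div_two_pow {c : ℝ} (hc : 0 ≤ c) (m : ℕ) :
    ENNReal.ofReal (c / 2 ^ m) = ENNReal.ofReal c * (1 / 2) ^ m := by
  rw [div_eq_mul_inv, ← inv_pow, ENNReal.ofReal_mul hc, ENNReal.ofReal_pow (by positivity),
    ENNReal.ofReal_inv_of_pos two_pos, ENNReal.ofReal_ofNat, one_div]

theorem add_mul_sq_le {N₁ N₂ ε a : ENNReal} (hε : N₁ * ε ≤ a / 2) (ha : N₂ * a ≤ 1 / 2) (n : ℕ) :
    N₁ * (ε * (1 / 2) ^ 2 ^ (n + 1)) +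
      N₂ * (a * (1 / 2) ^ 2 ^ n * (a * (1 / 2) ^ 2 ^ n)) ≤ a * (1 / 2) ^ 2 ^ (n + 1) := by
  calc _ = (N₁ * ε + N₂ * a * a) * (1 / 2 : ENNReal) ^ 2 ^ (n + 1) := by ring
    _ ≤ (a / 2 + 1 / 2 * a) * (1 / 2) ^ 2 ^ (n + 1) := by gcongr
    _ = a * (1 / 2) ^ 2 ^ (n + 1) := by
      rw [one_div, mul_comm _ a, ← div_eq_mul_inv, ENNReal.add_halves]

end Numerics

section Main

variable {d ℓ₀ L₀ κ : ℕ} {Ω : Type*} [MeasurableSpace Ω] {P : Measure Ω} {F : V d → Set Ω}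
  {H : ℕ → V d → Set Ω}

theorem measure_not_favourable_le_half_pow (hκ : 0 < κ) (hℓ : 7 ≤ ℓ₀) (hL₀ : 0 < L₀)
    (h₁ : CondC1 d ℓ₀ L₀ P F H) (h₂ : CondC2 d ℓ₀ L₀ κ P F H) {ε a : ENNReal}
    (hε : nearbyCard d κ * ε ≤ a / 2) (ha : pairsCard d ℓ₀ κ * a ≤ 1 / 2)
    (hp : ∀ j w, P (scaleEvent F H j (latticePoint ℓ₀ L₀ j w))ᶜ ≤ ε * (1 / 2) ^ 2 ^ j) (n : ℕ) :
    P {ω | ¬ Favourable ℓ₀ L₀ κ (occurs F H ω) n} ≤ (1 / 2) ^ 2 ^ n := by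
  have hbase : nearbyCard d κ * (ε * (1 / 2 : ENNReal) ^ 2 ^ 0) ≤ a * (1 / 2) ^ 2 ^ 0 := by
    rw [← mul_assoc]
    gcongr
    exact hε.trans ENNReal.half_le_self
  have hbad : P {ω | IsBad ℓ₀ L₀ κ (occurs F H ω) n 0} ≤ a * (1 / 2) ^ 2 ^ n :=
    (measure_isBad_le hκ hℓ hL₀ h₁ h₂ hp n 0).trans
      (sum_prod_witnesses_le (p := fun j => ε * (1 / 2) ^ 2 ^ j)
        (b := fun j => a * (1 / 2) ^ 2 ^ j) hκ hℓ hL₀ hbase (add_mul_sq_le hε ha) n 0)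
  have htail : ∑' k, nearbyCard d κ * (ε * (1 / 2 : ENNReal) ^ 2 ^ (n + 1 + k)) ≤
      a / 2 * (1 / 2) ^ 2 ^ n := by
    simp only [← mul_assoc]
    rw [ENNReal.tsum_mul_left]
    exact mul_le_mul' hε (tsum_half_pow_two_pow_le n)
  have ha_half : a ≤ 1 / 2 := (le_mul_of_one_le_left' (by
    exact_mod_cast Nat.one_le_pow _ _ (Nat.pow_pos (by omega)))).trans ha
  calc _ ≤ a * (1 / 2) ^ 2 ^ n + a / 2 * (1 / 2) ^ 2 ^ n :=
        (measure_not_favourable_le hp n).trans (add_le_add hbad htail)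
    _ = (a + a / 2) * (1 / 2) ^ 2 ^ n := (add_mul _ _ _).symm
    _ ≤ (1 / 2 + 1 / 2) * (1 / 2) ^ 2 ^ n :=
        mul_le_mul' (add_le_add ha_half (ENNReal.half_le_self.trans ha_half)) le_rfl
    _ = (1 / 2) ^ 2 ^ n := by rw [ENNReal.add_halves, one_mul]

/-- The admissible failure probability of an event of scale `n`, relative to `2^{-2^n}`. With it the
recursion `b (n + 1) = nearbyCard * p (n + 1) + pairsCard * b n ^ 2` for the probability of a bad
point preserves `b n ≤ 2^{-2^n} / (2 * pairsCard)`. -/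
def failureThreshold (d ℓ₀ κ : ℕ) : ℝ := (4 * (nearbyCard d κ * pairsCard d ℓ₀ κ))⁻¹

theorem nearbyCard_pos (d κ : ℕ) : 0 < nearbyCard d κ := Nat.pow_pos (by omega)

theorem pairsCard_pos (d ℓ₀ κ : ℕ) : 0 < pairsCard d ℓ₀ κ :=
  Nat.pow_pos (Nat.pow_pos (by omega))

theorem failureThreshold_mem_Ioo (d ℓ₀ κ : ℕ) : failureThreshold d ℓ₀ κ ∈ Ioo (0 : ℝ) 1 := by
  have hcard : (1 : ℝ) ≤ nearbyCard d κ * pairsCard d ℓ₀ κ := by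
    exact_mod_cast Nat.mul_pos (nearbyCard_pos d κ) (pairsCard_pos d ℓ₀ κ)
  exact ⟨inv_pos.2 (by linarith), inv_lt_one_of_one_lt₀ (by linarith)⟩

theorem nearbyCard_mul_failureThreshold (d ℓ₀ κ : ℕ) :
    nearbyCard d κ * ENNReal.ofReal (failureThreshold d ℓ₀ κ) =
      ENNReal.ofReal (2 * pairsCard d ℓ₀ κ)⁻¹ / 2 := by
  have hnear : (nearbyCard d κ : ℝ) ≠ 0 := Nat.cast_ne_zero.2 (nearbyCard_pos d κ).ne'
  rw [← ENNReal.ofReal_natCast, ← ENNReal.ofReal_mul (by positivity), ← ENNReal.ofReal_ofNat 2,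
    ← ENNReal.ofReal_div_of_pos two_pos, failureThreshold]
  congr 1
  field_simp
  norm_num

theorem pairsCard_mul_inv (d ℓ₀ κ : ℕ) :
    pairsCard d ℓ₀ κ * ENNReal.ofReal (2 * pairsCard d ℓ₀ κ)⁻¹ = 1 / 2 := by
  have hpairs : (pairsCard d ℓ₀ κ : ℝ) ≠ 0 := Nat.cast_ne_zero.2 (pairsCard_pos d ℓ₀ κ).ne'
  rw [← ENNReal.ofReal_natCast, ← ENNReal.ofReal_mul (by positivity), ← ENNReal.ofReal_one,
    ← ENNReal.ofReal_ofNat 2, ← ENNReal.ofReal_div_of_pos two_pos]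
  congr 1
  field_simp

theorem measure_scaleEvent_compl_le {c : ℝ} (hc : 0 ≤ c)
    (hF : ∀ x ∈ latt d ℓ₀ L₀ 0, P (F x)ᶜ ≤ ENNReal.ofReal (c / 2))
    (hH : ∀ n, 1 ≤ n → ∀ x ∈ latt d ℓ₀ L₀ n, P (H n x)ᶜ ≤ ENNReal.ofReal (c / 2 ^ 2 ^ n))
    (j : ℕ) (w : V d) :
    P (scaleEvent F H j (latticePoint ℓ₀ L₀ j w))ᶜ ≤ ENNReal.ofReal c * (1 / 2) ^ 2 ^ j := by
  rw [← ofReal_div_two_pow hc]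
  cases j with
  | zero => simpa [scaleEvent] using hF _ (mem_latt_iff.2 ⟨w, rfl⟩)
  | succ j => exact hH _ (by omega) _ (mem_latt_iff.2 ⟨w, rfl⟩)

theorem one_sub_le_measure_of_compl_subset [IsProbabilityMeasure P] {A B : Set Ω} {q : ENNReal}
    (hB : P B ≤ q) (hAB : Aᶜ ⊆ B) : 1 - q ≤ P A := by
  rw [tsub_le_iff_right, ← measure_univ (μ := P), ← union_compl_self A]
  exact (measure_union_le _ _).trans (add_le_add_right ((measure_mono hAB).trans hB) _)

theorem good_zero_bridges_general (hd : 3 ≤ d) (hκ : 20 ≤ κ) (hℓ : 1000 ≤ ℓ₀) (hL₀ : 0 < L₀)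
    (h₁ : CondC1 d ℓ₀ L₀ P F H) (h₂ : CondC2 d ℓ₀ L₀ κ P F H)
    (hF : ∀ x ∈ latt d ℓ₀ L₀ 0, P (F x)ᶜ ≤ ENNReal.ofReal (failureThreshold d ℓ₀ κ / 2))
    (hH : ∀ n, 1 ≤ n → ∀ x ∈ latt d ℓ₀ L₀ n,
      P (H n x)ᶜ ≤ ENNReal.ofReal (failureThreshold d ℓ₀ κ / 2 ^ 2 ^ n)) (n : ℕ) :
    1 - (1 / 2 : ENNReal) ^ 2 ^ n ≤ P (G0EventI d ℓ₀ L₀ κ F H n) ∧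
      1 - (1 / 2 : ENNReal) ^ 2 ^ n ≤ P (G0EventII d ℓ₀ L₀ κ F H n) := by
  have : IsProbabilityMeasure P := h₁.isProbabilityMeasure
  have hrare : P {ω | ¬ Favourable ℓ₀ L₀ κ (occurs F H ω) n} ≤ (1 / 2) ^ 2 ^ n :=
    measure_not_favourable_le_half_pow (by omega) (by omega) hL₀ h₁ h₂
      (nearbyCard_mul_failureThreshold d ℓ₀ κ).le (pairsCard_mul_inv d ℓ₀ κ).le
      (measure_scaleEvent_compl_le (failureThreshold_mem_Ioo d ℓ₀ κ).1.le hF hH) n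
  exact ⟨one_sub_le_measure_of_compl_subset hrare fun ω hω hfav =>
      hω (hfav.mem_G0EventI hd hκ hℓ hL₀),
    one_sub_le_measure_of_compl_subset hrare fun ω hω hfav =>
      hω (hfav.mem_G0EventII hd hκ hℓ hL₀)⟩

end Main

/-- Corollary 2.7: existence of good `0`-bridges with overwhelming probability, for either
notion of admissibility. -/
theorem good_zero_bridges (d : ℕ) (hd : 3 ≤ d) (κ : ℕ) (hκ : 20 ≤ κ) :
    ∃ C : ℕ, ∀ ℓ₀ : ℕ, C ≤ ℓ₀ →
      ∃ K : ℕ, 100 ≤ K ∧ ∃ c₁ c₂ : ℝ, c₁ ∈ Set.Ioo (0 : ℝ) 1 ∧ c₂ ∈ Set.Ioo (0 : ℝ) 1 ∧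
        ∃ C' : ℕ, ∀ L₀ : ℕ, C' ≤ L₀ →
          ∀ {Ω : Type} [MeasurableSpace Ω] (P : Measure Ω), IsProbabilityMeasure P →
            ∀ (F : V d → Set Ω) (H : ℕ → V d → Set Ω),
              CondC1 d ℓ₀ L₀ P F H → CondC2 d ℓ₀ L₀ κ P F H →
              (∀ x ∈ latt d ℓ₀ L₀ 0, P (F x)ᶜ ≤ ENNReal.ofReal c₁) →
              (∀ n : ℕ, 1 ≤ n → ∀ x ∈ latt d ℓ₀ L₀ n,
                P (H n x)ᶜ ≤ ENNReal.ofReal (c₂ / 2 ^ 2 ^ n)) →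
              ∀ n : ℕ,
                1 - (1 / 2 : ENNReal) ^ 2 ^ n ≤ P (G0EventI d ℓ₀ L₀ κ F H n) ∧
                1 - (1 / 2 : ENNReal) ^ 2 ^ n ≤ P (G0EventII d ℓ₀ L₀ κ F H n) := by
  refine ⟨1000, fun ℓ₀ hℓ => ?_⟩
  obtain ⟨hpos, hlt⟩ := failureThreshold_mem_Ioo d ℓ₀ κ
  exact ⟨100, le_rfl, failureThreshold d ℓ₀ κ / 2, failureThreshold d ℓ₀ κ,
    ⟨half_pos hpos, (half_lt_self hpos).trans hlt⟩, ⟨hpos, hlt⟩, 1,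
    fun _ hL₀ _ _ _ _ _ _ => good_zero_bridges_general hd hκ hℓ hL₀⟩

end
end GFFperc
end

section
/- There exist constants c, C > 0 depending only on d such that for every ε > 0 and all integers L, R ≥ 1: P[|φ_x − φ^L_x| < ε for every x ∈ B_R] ≥ 1 − C R^d exp(−c ε² L^{(d−2)/2}). -/
open MeasureTheory ProbabilityTheory Filter Set

namespace GFFperc

noncomputable section

/-- Covariance of the truncated field `φ^L`. -/
def covTrunc (d L : ℕ) (x y : V d) : ℝ := (1 / 2) * ∑ ℓ ∈ Finset.range (L + 1), lazyP d ℓ x y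

/-- Covariance of the tail field `φ - φ^L`. -/
def covTail (d L : ℕ) (x y : V d) : ℝ := (1 / 2) * ∑' ℓ : ℕ, lazyP d (ℓ + L + 1) x y

/-- The truncated fields `φ^L` are coupled with `φ` so that, for each `L`, `φ^L` and
`φ - φ^L` are independent centered Gaussian fields with the stated covariances. -/
def IsTruncCoupling (d : ℕ) {Ω : Type*} [MeasurableSpace Ω] (P : Measure Ω)
    (φ : V d → Ω → ℝ) (φL : ℕ → V d → Ω → ℝ) : Prop :=
  ∀ L : ℕ, IsCGF P (φL L) (covTrunc d L) ∧
    IsCGF P (fun x ω => φ x ω - φL L x ω) (covTail d L) ∧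
    IndepFun (proc (φL L)) (proc fun x ω => φ x ω - φL L x ω) P

/-!
The value at a single point of `φ - φ^L` is a centered Gaussian of variance
`(1/2) ∑_{ℓ > L} q_ℓ(0, 0)`. By Fourier inversion `q_ℓ(0, 0)` is the mean over the torus of the
`ℓ`-th power of the characteristic function of one lazy step. Laziness makes that function
nonnegative, and it is at most `exp (-∑ i, (1 - cos (θ i)) / (2 * d))`, so the integral is
dominated by a product of `d` one-dimensional Gaussian integrals, each of order `ℓ ^ (-1/2)`.
Hence `q_ℓ(0, 0)` is of order `ℓ ^ (-d/2)` and the variance of order `L ^ (-(d-2)/2)`; the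
Gaussian tail bound and a union bound over the `(2 * R + 1) ^ d` points of the box conclude.
-/

section Fourier

/-- The uniform distribution on the interval `(-π, π]`, which represents the circle. -/
def uniformAngle : Measure ℝ := ProbabilityTheory.cond volume (Ioc (-Real.pi) Real.pi)

/-- The uniform distribution on `(-π, π]^d`, which represents the dual group of `ℤ^d`. -/
def uniformTorus (d : ℕ) : Measure (Fin d → ℝ) := Measure.pi fun _ => uniformAngle

/-- The product of cosines `∏ i, cos (θ i * z i)`. It replaces the character `exp (i θ · z)` in
the Fourier analysis of laws on `ℤ^d` that are invariant under reflection of each coordinate, and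
keeps all integrals real. -/
def cosChar {d : ℕ} (z : V d) (θ : Fin d → ℝ) : ℝ := ∏ i, Real.cos (θ i * z i)

/-- The characteristic function of one step of the lazy simple random walk on `ℤ^d`. -/
def lazyCharFun (d : ℕ) (θ : Fin d → ℝ) : ℝ := 1 / 2 + 1 / (2 * d) * ∑ i, Real.cos (θ i)

variable {d : ℕ}

instance isProbabilityMeasure_uniformAngle : IsProbabilityMeasure uniformAngle := by
  have volume_ne_zero : volume (Ioc (-Real.pi) Real.pi) ≠ 0 := by
    simp [Real.volume_Ioc, Real.pi_pos]
  exact cond_isProbabilityMeasure_of_finite volume_ne_zero measure_Ioc_lt_top.ne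

instance isProbabilityMeasure_uniformTorus : IsProbabilityMeasure (uniformTorus d) := by
  unfold uniformTorus
  infer_instance

lemma integral_uniformAngle (f : ℝ → ℝ) :
    ∫ t, f t ∂uniformAngle = (2 * Real.pi)⁻¹ * ∫ t in Ioc (-Real.pi) Real.pi, f t := by
  have volume_eq : volume (Ioc (-Real.pi) Real.pi) = ENNReal.ofReal (2 * Real.pi) := by
    rw [Real.volume_Ioc, sub_neg_eq_add, two_mul]
  rw [uniformAngle, ProbabilityTheory.cond, integral_smul_measure, volume_eq, ENNReal.toReal_inv,
    ENNReal.toReal_ofReal Real.two_pi_pos.le, smul_eq_mul]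

lemma integral_cos_mul_intCast (n : ℤ) :
    ∫ t, Real.cos (t * n) ∂uniformAngle = if n = 0 then 1 else 0 := by
  have neg_pi_le_pi : -Real.pi ≤ Real.pi := by linarith [Real.pi_pos]
  split_ifs with hn
  · simp [hn]
  · rw [integral_uniformAngle, ← intervalIntegral.integral_of_le neg_pi_le_pi,
      intervalIntegral.integral_comp_mul_right _ (Int.cast_ne_zero.2 hn), integral_cos, neg_mul,
      Real.sin_neg, mul_comm Real.pi, Real.sin_int_mul_pi]
    simp

lemma continuous_cosChar (z : V d) : Continuous (cosChar z) := by
  unfold cosChar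
  fun_prop

lemma abs_cosChar_le_one (z : V d) (θ : Fin d → ℝ) : |cosChar z θ| ≤ 1 := by
  rw [cosChar, Finset.abs_prod]
  exact Finset.prod_le_one (fun _ _ => abs_nonneg _) fun _ _ => Real.abs_cos_le_one _

lemma integral_cosChar (z : V d) :
    ∫ θ, cosChar z θ ∂uniformTorus d = if z = 0 then 1 else 0 := by
  simp only [cosChar, uniformTorus]
  rw [integral_fintype_prod_eq_prod (f := fun i t => Real.cos (t * z i))]
  simp_rw [integral_cos_mul_intCast, Finset.prod_ite_zero, Finset.mem_univ, true_implies,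
    Finset.prod_const_one, funext_iff, Pi.zero_apply]

lemma cosChar_add_zsmul_unitV (z : V d) (i : Fin d) (s : ℤ) (θ : Fin d → ℝ) :
    cosChar (z + s • unitV d i) θ =
      Real.cos (θ i * (z i + s)) * ∏ j ∈ Finset.univ.erase i, Real.cos (θ j * z j) := by
  rw [cosChar, ← Finset.mul_prod_erase _ _ (Finset.mem_univ i)]
  congr 1
  · simp [unitV]
  · refine Finset.prod_congr rfl fun j hj => ?_
    simp [unitV, Finset.ne_of_mem_erase hj]

lemma cosChar_add_unitV_add_cosChar_sub_unitV (z : V d) (i : Fin d) (θ : Fin d → ℝ) :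
    cosChar (z + unitV d i) θ + cosChar (z - unitV d i) θ =
      2 * Real.cos (θ i) * cosChar z θ := by
  have shift_pos := cosChar_add_zsmul_unitV z i 1 θ
  have shift_neg := cosChar_add_zsmul_unitV z i (-1) θ
  have shift_zero := cosChar_add_zsmul_unitV z i 0 θ
  rw [one_smul] at shift_pos
  rw [neg_one_smul, ← sub_eq_add_neg] at shift_neg
  rw [zero_smul, add_zero] at shift_zero
  rw [shift_pos, shift_neg, shift_zero]
  push_cast
  rw [mul_add, mul_add, mul_add, mul_neg, mul_zero, add_zero, mul_one, ← sub_eq_add_neg,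
    Real.cos_add, Real.cos_sub]
  ring

lemma lazyCharFun_mul_cosChar (z : V d) (θ : Fin d → ℝ) :
    lazyCharFun d θ * cosChar z θ =
      1 / 2 * cosChar z θ +
        1 / (4 * d) * ∑ i, (cosChar (z + unitV d i) θ + cosChar (z - unitV d i) θ) := by
  simp_rw [cosChar_add_unitV_add_cosChar_sub_unitV, ← Finset.sum_mul, ← Finset.mul_sum]
  rw [lazyCharFun]
  ring

lemma continuous_lazyCharFun : Continuous (lazyCharFun d) := by
  unfold lazyCharFun
  fun_prop

lemma one_div_two_mul_mul_self_le (x : ℝ) : 1 / (2 * x) * x ≤ 1 / 2 := by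
  calc 1 / (2 * x) * x = 1 / 2 * (x⁻¹ * x) := by ring
    _ ≤ 1 / 2 := mul_le_of_le_one_right one_half_pos.le inv_mul_le_one

lemma lazyCharFun_nonneg (θ : Fin d → ℝ) : 0 ≤ lazyCharFun d θ := by
  have neg_d_le_sum : -(d : ℝ) ≤ ∑ i, Real.cos (θ i) := by
    simpa using Finset.sum_le_sum fun i (_ : i ∈ Finset.univ) => Real.neg_one_le_cos (θ i)
  calc (0 : ℝ) ≤ 1 / 2 + 1 / (2 * d) * -d := by
        rw [mul_neg, ← sub_eq_add_neg, sub_nonneg]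
        exact one_div_two_mul_mul_self_le d
    _ ≤ lazyCharFun d θ := by
        unfold lazyCharFun
        gcongr

lemma lazyCharFun_le_exp (θ : Fin d → ℝ) :
    lazyCharFun d θ ≤ Real.exp (∑ i, -(1 / (2 * d)) * (1 - Real.cos (θ i))) := by
  calc lazyCharFun d θ
      ≤ -(1 / (2 * d)) * (d - ∑ i, Real.cos (θ i)) + 1 := by
        rw [lazyCharFun, mul_sub]
        linarith [one_div_two_mul_mul_self_le d]
    _ = (∑ i, -(1 / (2 * d)) * (1 - Real.cos (θ i))) + 1 := by
        simp [← Finset.mul_sum, Finset.sum_sub_distrib]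
    _ ≤ Real.exp (∑ i, -(1 / (2 * d)) * (1 - Real.cos (θ i))) := Real.add_one_le_exp _

lemma lazyCharFun_pow_le_prod_exp (ℓ : ℕ) (θ : Fin d → ℝ) :
    lazyCharFun d θ ^ ℓ ≤ ∏ i, Real.exp (-(ℓ / (2 * d)) * (1 - Real.cos (θ i))) := by
  refine (pow_le_pow_left₀ (lazyCharFun_nonneg θ) (lazyCharFun_le_exp θ) ℓ).trans_eq ?_
  rw [← Real.exp_nat_mul, ← Real.exp_sum, Finset.mul_sum]
  congr! 2
  ring

lemma exp_neg_mul_one_sub_cos_le_one {a : ℝ} (ha : 0 ≤ a) (t : ℝ) :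
    Real.exp (-a * (1 - Real.cos t)) ≤ 1 := by
  rw [Real.exp_le_one_iff, neg_mul, neg_nonpos]
  exact mul_nonneg ha (sub_nonneg.2 (Real.cos_le_one t))

lemma lazyCharFun_le_one (θ : Fin d → ℝ) : lazyCharFun d θ ≤ 1 := by
  simpa using (lazyCharFun_pow_le_prod_exp 1 θ).trans <|
    Finset.prod_le_one (fun _ _ => (Real.exp_pos _).le)
      fun i _ => exp_neg_mul_one_sub_cos_le_one (by positivity) (θ i)

lemma integrable_lazyCharFun_pow_mul_cosChar (ℓ : ℕ) (z : V d) :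
    Integrable (fun θ => lazyCharFun d θ ^ ℓ * cosChar z θ) (uniformTorus d) := by
  have continuous_integrand : Continuous fun θ => lazyCharFun d θ ^ ℓ * cosChar z θ :=
    (continuous_lazyCharFun.pow ℓ).mul (continuous_cosChar z)
  refine .of_bound (C := 1) continuous_integrand.aestronglyMeasurable (ae_of_all _ fun θ => ?_)
  rw [norm_mul, norm_pow, Real.norm_of_nonneg (lazyCharFun_nonneg θ)]
  exact mul_le_one₀ (pow_le_one₀ (lazyCharFun_nonneg θ) (lazyCharFun_le_one θ)) (norm_nonneg _)
    (abs_cosChar_le_one z θ)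

lemma integrable_lazyCharFun_pow (ℓ : ℕ) :
    Integrable (fun θ => lazyCharFun d θ ^ ℓ) (uniformTorus d) := by
  simpa [cosChar] using integrable_lazyCharFun_pow_mul_cosChar ℓ (0 : V d)

lemma integral_lazyCharFun_pow_succ_mul_cosChar (ℓ : ℕ) (z : V d) :
    ∫ θ, lazyCharFun d θ ^ (ℓ + 1) * cosChar z θ ∂uniformTorus d =
      1 / 2 * ∫ θ, lazyCharFun d θ ^ ℓ * cosChar z θ ∂uniformTorus d +
        1 / (4 * d) * ∑ i, (∫ θ, lazyCharFun d θ ^ ℓ * cosChar (z + unitV d i) θ ∂uniformTorus d +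
          ∫ θ, lazyCharFun d θ ^ ℓ * cosChar (z - unitV d i) θ ∂uniformTorus d) := by
  have integrable := integrable_lazyCharFun_pow_mul_cosChar (d := d) ℓ
  have integrable_neighbours (i : Fin d) := (integrable (z + unitV d i)).fun_add
    (integrable (z - unitV d i))
  simp_rw [← integral_add (integrable _) (integrable _)]
  rw [← integral_finsetSum _ fun i _ => integrable_neighbours i, ← integral_const_mul,
    ← integral_const_mul, ← integral_add ((integrable z).const_mul _)
      ((integrable_finsetSum _ fun i _ => integrable_neighbours i).const_mul _)]
  congr 1 with θ
  simp_rw [pow_succ, mul_assoc, lazyCharFun_mul_cosChar, ← mul_add, ← Finset.mul_sum]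
  ring

theorem lazyP_eq_integral (ℓ : ℕ) (x y : V d) :
    lazyP d ℓ x y = ∫ θ, lazyCharFun d θ ^ ℓ * cosChar (x - y) θ ∂uniformTorus d := by
  induction ℓ generalizing x with
  | zero => simp [lazyP, integral_cosChar, sub_eq_zero]
  | succ ℓ ih =>
    rw [integral_lazyCharFun_pow_succ_mul_cosChar, lazyP]
    simp_rw [ih, add_sub_right_comm, sub_right_comm _ (unitV d _) y]

end Fourier

section HeatKernel

variable {d : ℕ}

lemma integral_exp_neg_mul_one_sub_cos_le {a : ℝ} (ha : 0 < a) :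
    ∫ t, Real.exp (-a * (1 - Real.cos t)) ∂uniformAngle ≤
      √(Real.pi / (8 * a)) := by
  set b : ℝ := a * (2 / Real.pi ^ 2) with hb
  have b_pos : 0 < b := by have := Real.pi_pos; positivity
  have integrable_gaussian := integrable_exp_neg_mul_sq b_pos
  have exp_le_gaussian : ∀ t ∈ Ioc (-Real.pi) Real.pi,
      Real.exp (-a * (1 - Real.cos t)) ≤ Real.exp (-b * t ^ 2) := fun t ht => by
    have := Real.cos_le_one_sub_mul_cos_sq (x := t) (abs_le.2 ⟨ht.1.le, ht.2⟩)
    rw [Real.exp_le_exp, hb]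
    nlinarith
  have integrableOn_exp : IntegrableOn (fun t => Real.exp (-a * (1 - Real.cos t)))
      (Ioc (-Real.pi) Real.pi) :=
    (by fun_prop : Continuous fun t => Real.exp (-a * (1 - Real.cos t))).integrableOn_Ioc
  rw [integral_uniformAngle]
  calc (2 * Real.pi)⁻¹ * ∫ t in Ioc (-Real.pi) Real.pi, Real.exp (-a * (1 - Real.cos t))
      ≤ (2 * Real.pi)⁻¹ * ∫ t in Ioc (-Real.pi) Real.pi, Real.exp (-b * t ^ 2) := by
        gcongr _ * ?_
        exact setIntegral_mono_on integrableOn_exp integrable_gaussian.integrableOn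
          measurableSet_Ioc exp_le_gaussian
    _ ≤ (2 * Real.pi)⁻¹ * ∫ t, Real.exp (-b * t ^ 2) := by
        gcongr _ * ?_
        exact setIntegral_le_integral integrable_gaussian (ae_of_all _ fun _ => (Real.exp_pos _).le)
    _ = √(Real.pi / (8 * a)) := by
        rw [integral_gaussian, ← Real.sqrt_sq (inv_nonneg.2 Real.two_pi_pos.le),
          ← Real.sqrt_mul (sq_nonneg _), hb]
        congr 1
        field_simp
        norm_num

lemma integral_lazyCharFun_pow_le {ℓ : ℕ} (hℓ : ℓ ≠ 0) :
    ∫ θ, lazyCharFun d θ ^ ℓ ∂uniformTorus d ≤ √(Real.pi * d / (4 * ℓ)) ^ d := by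
  set a : ℝ := ℓ / (2 * d) with ha
  have integrable_exp : Integrable (fun t => Real.exp (-a * (1 - Real.cos t))) uniformAngle :=
    .of_bound (C := 1) (Continuous.aestronglyMeasurable (by fun_prop)) <| ae_of_all _ fun t => by
      rw [Real.norm_of_nonneg (Real.exp_pos _).le]
      exact exp_neg_mul_one_sub_cos_le_one (by positivity) t
  calc ∫ θ, lazyCharFun d θ ^ ℓ ∂uniformTorus d
      ≤ ∫ θ, ∏ i, Real.exp (-a * (1 - Real.cos (θ i))) ∂uniformTorus d :=
        integral_mono (integrable_lazyCharFun_pow ℓ) (.fintype_prod fun _ => integrable_exp)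
          fun θ => lazyCharFun_pow_le_prod_exp ℓ θ
    _ = ∏ _i : Fin d, ∫ t, Real.exp (-a * (1 - Real.cos t)) ∂uniformAngle :=
        integral_fintype_prod_eq_prod fun _ t => Real.exp (-a * (1 - Real.cos t))
    _ ≤ ∏ _i : Fin d, √(Real.pi / (8 * a)) := by
        refine Finset.prod_le_prod (fun _ _ => integral_nonneg fun _ => (Real.exp_pos _).le)
          fun i _ => integral_exp_neg_mul_one_sub_cos_le ?_
        have := i.pos
        positivity
    _ = √(Real.pi * d / (4 * ℓ)) ^ d := by
        rw [Finset.prod_const, Finset.card_univ, Fintype.card_fin, ha]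
        congr 2
        field_simp
        ring

lemma lazyP_nonneg (ℓ : ℕ) (x y : V d) : 0 ≤ lazyP d ℓ x y := by
  induction ℓ generalizing x with
  | zero =>
    rw [lazyP]
    positivity
  | succ ℓ ih =>
    have neighbours_nonneg :
        0 ≤ ∑ i, (lazyP d ℓ (x + unitV d i) y + lazyP d ℓ (x - unitV d i) y) :=
      Finset.sum_nonneg fun i _ => add_nonneg (ih _) (ih _)
    have := ih x
    rw [lazyP]
    positivity

theorem lazyP_le {ℓ : ℕ} (hℓ : ℓ ≠ 0) (x y : V d) :
    lazyP d ℓ x y ≤ √(Real.pi * d / 4) ^ d * (ℓ : ℝ) ^ (-(d / 2 : ℝ)) := by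
  have ℓ_nonneg : (0 : ℝ) ≤ ℓ := ℓ.cast_nonneg
  calc lazyP d ℓ x y
      = ∫ θ, lazyCharFun d θ ^ ℓ * cosChar (x - y) θ ∂uniformTorus d := lazyP_eq_integral ℓ x y
    _ ≤ ∫ θ, lazyCharFun d θ ^ ℓ ∂uniformTorus d := by
        refine integral_mono (integrable_lazyCharFun_pow_mul_cosChar ℓ _)
          (integrable_lazyCharFun_pow ℓ) fun θ => ?_
        exact mul_le_of_le_one_right (pow_nonneg (lazyCharFun_nonneg θ) ℓ)
          ((le_abs_self _).trans (abs_cosChar_le_one _ θ))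
    _ ≤ √(Real.pi * d / (4 * ℓ)) ^ d := integral_lazyCharFun_pow_le hℓ
    _ = √(Real.pi * d / 4) ^ d * (ℓ : ℝ) ^ (-(d / 2 : ℝ)) := by
        rw [← div_div, Real.sqrt_div' _ ℓ_nonneg, div_pow, div_eq_mul_inv, Real.sqrt_eq_rpow ℓ,
          ← Real.rpow_mul_natCast ℓ_nonneg, Real.rpow_neg ℓ_nonneg, one_div_mul_eq_div]

lemma sum_range_rpow_neg_le {a x : ℝ} (ha : 0 < a) (hx : 0 < x) (N : ℕ) :
    ∑ k ∈ Finset.range N, (x + ↑(k + 1)) ^ (-(a + 1)) ≤ x ^ (-a) / a := by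
  have antitoneOn_rpow : AntitoneOn (fun t : ℝ => t ^ (-(a + 1))) (Icc x (x + N)) :=
    (Real.antitoneOn_rpow_Ioi_of_exponent_nonpos (by linarith)).mono
      fun t ht => hx.trans_le ht.1
  have zero_notMem : (0 : ℝ) ∉ uIcc x (x + N) :=
    Set.notMem_uIcc_of_lt hx (by positivity)
  calc ∑ k ∈ Finset.range N, (x + ↑(k + 1)) ^ (-(a + 1))
      ≤ ∫ t in x..x + N, t ^ (-(a + 1)) := antitoneOn_rpow.sum_le_integral
    _ = (x ^ (-a) - (x + N) ^ (-a)) / a := by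
        rw [integral_rpow (.inr ⟨by linarith, zero_notMem⟩), show -(a + 1) + 1 = -a by ring,
          div_neg, ← neg_div, neg_sub]
    _ ≤ x ^ (-a) / a := by
        gcongr
        exact sub_le_self _ (by positivity)

theorem covTail_le (hd : 2 < d) {L : ℕ} (hL : L ≠ 0) (x y : V d) :
    covTail d L x y ≤ √(Real.pi * d / 4) ^ d / (d - 2) * (L : ℝ) ^ (-((d - 2) / 2 : ℝ)) := by
  have d_sub_two_pos : (0 : ℝ) < d - 2 := sub_pos.2 (by exact_mod_cast hd)
  have L_pos : (0 : ℝ) < L := by positivity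
  set a : ℝ := (d - 2) / 2 with ha
  set K : ℝ := √(Real.pi * d / 4) ^ d
  have a_pos : 0 < a := half_pos d_sub_two_pos
  have lazyP_le_rpow (k : ℕ) : lazyP d (k + L + 1) x y ≤ K * (L + ↑(k + 1) : ℝ) ^ (-(a + 1)) := by
    convert lazyP_le (d := d) (k + L).succ_ne_zero x y using 3
    · push_cast
      ring
    · rw [ha]
      ring
  have sum_le (N : ℕ) :
      ∑ k ∈ Finset.range N, lazyP d (k + L + 1) x y ≤ K * ((L : ℝ) ^ (-a) / a) :=
    calc ∑ k ∈ Finset.range N, lazyP d (k + L + 1) x y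
        ≤ ∑ k ∈ Finset.range N, K * (L + ↑(k + 1) : ℝ) ^ (-(a + 1)) :=
          Finset.sum_le_sum fun k _ => lazyP_le_rpow k
      _ ≤ K * ((L : ℝ) ^ (-a) / a) := by
          rw [← Finset.mul_sum]
          gcongr
          exact sum_range_rpow_neg_le a_pos L_pos N
  calc covTail d L x y
      ≤ 1 / 2 * (K * ((L : ℝ) ^ (-a) / a)) := by
        unfold covTail
        gcongr
        exact Real.tsum_le_of_sum_range_le (fun _ => lazyP_nonneg _ x y) sum_le
    _ = K / (d - 2) * (L : ℝ) ^ (-a) := by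
        rw [ha]
        field_simp

end HeatKernel

section Concentration

variable {Ω ι : Type*} [MeasurableSpace Ω] {P : Measure Ω}

lemma hasSubgaussianMGF_id_gaussianReal {v c : NNReal} (hvc : v ≤ c) :
    HasSubgaussianMGF id c (gaussianReal 0 v) where
  integrable_exp_mul := integrable_exp_mul_gaussianReal
  mgf_le t := by
    simp only [mgf_id_gaussianReal, zero_mul, zero_add]
    gcongr

lemma measureReal_le_abs_le_of_hasSubgaussianMGF [IsFiniteMeasure P] {X : Ω → ℝ} {c : NNReal}
    (hX : HasSubgaussianMGF X c P) {ε : ℝ} (hε : 0 ≤ ε) :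
    P.real {ω | ε ≤ |X ω|} ≤ 2 * Real.exp (-ε ^ 2 / (2 * c)) := by
  have two_tails : {ω | ε ≤ |X ω|} = {ω | ε ≤ X ω} ∪ {ω | ε ≤ (-X) ω} :=
    Set.ext fun ω => le_abs (a := ε) (b := X ω)
  rw [two_tails, two_mul]
  exact (measureReal_union_le _ _).trans
    (add_le_add (hX.measure_ge_le hε) (hX.neg.measure_ge_le hε))

lemma one_sub_le_measureReal_forall_abs_lt [IsProbabilityMeasure P] {X : ι → Ω → ℝ} {c : NNReal}
    (s : Finset ι) (hX : ∀ i ∈ s, HasSubgaussianMGF (X i) c P) {ε : ℝ} (hε : 0 ≤ ε) :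
    1 - 2 * s.card * Real.exp (-ε ^ 2 / (2 * c)) ≤ P.real {ω | ∀ i ∈ s, |X i ω| < ε} := by
  set A : Set Ω := {ω | ∀ i ∈ s, |X i ω| < ε} with hA
  have compl_eq : Aᶜ = ⋃ i ∈ s, {ω | ε ≤ |X i ω|} := by
    ext ω
    simp [hA]
  have compl_le : P.real Aᶜ ≤ 2 * s.card * Real.exp (-ε ^ 2 / (2 * c)) :=
    calc P.real Aᶜ ≤ ∑ i ∈ s, P.real {ω | ε ≤ |X i ω|} :=
          compl_eq ▸ measureReal_biUnion_finset_le s _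
      _ ≤ ∑ _i ∈ s, 2 * Real.exp (-ε ^ 2 / (2 * c)) :=
          Finset.sum_le_sum fun i hi => measureReal_le_abs_le_of_hasSubgaussianMGF (hX i hi) hε
      _ = 2 * s.card * Real.exp (-ε ^ 2 / (2 * c)) := by
          rw [Finset.sum_const, nsmul_eq_mul]
          ring
  have one_le : 1 ≤ P.real A + P.real Aᶜ := by
    simpa using measureReal_union_le (μ := P) A Aᶜ
  linarith

variable {d : ℕ}

lemma IsCGF.hasSubgaussianMGF {ψ : V d → Ω → ℝ} {C : V d → V d → ℝ} (hψ : IsCGF P ψ C)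
    {x : V d} {v : ℝ} (hv : C x x ≤ v) : HasSubgaussianMGF (ψ x) v.toNNReal P := by
  have map_eq : P.map (ψ x) = gaussianReal 0 (C x x).toNNReal := by
    simpa using hψ.2 {x} fun _ => 1
  refine .of_map (hψ.1 x).aemeasurable (X := id) ?_
  rw [map_eq]
  exact hasSubgaussianMGF_id_gaussianReal (Real.toNNReal_le_toNNReal hv)

lemma box_natCast_eq_piFinset (d R : ℕ) :
    box d (R : ℝ) = Fintype.piFinset fun _ : Fin d => Finset.Icc (-(R : ℤ)) R := by
  ext x
  simp only [box, boxAt, mem_ofPred_eq, Pi.zero_apply, Int.cast_zero, sub_zero, Finset.mem_coe,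
    Fintype.mem_piFinset, Finset.mem_Icc, ← abs_le]
  exact_mod_cast Iff.rfl

lemma card_piFinset_Icc_neg (d R : ℕ) :
    (Fintype.piFinset fun _ : Fin d => Finset.Icc (-(R : ℤ)) R).card = (2 * R + 1) ^ d := by
  rw [Fintype.card_piFinset_const, Int.card_Icc]
  congr 1
  omega

theorem IsCGF.one_sub_le_measureReal_forall_box_abs_lt [IsProbabilityMeasure P] {ψ : V d → Ω → ℝ}
    {C : V d → V d → ℝ} (hψ : IsCGF P ψ C) {v : ℝ} (hv : 0 ≤ v) (hC : ∀ x, C x x ≤ v)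
    {ε : ℝ} (hε : 0 ≤ ε) (R : ℕ) :
    1 - 2 * (2 * R + 1) ^ d * Real.exp (-ε ^ 2 / (2 * v)) ≤
      P.real {ω | ∀ x ∈ box d (R : ℝ), |ψ x ω| < ε} := by
  have := one_sub_le_measureReal_forall_abs_lt (c := v.toNNReal)
    (Fintype.piFinset fun _ : Fin d => Finset.Icc (-(R : ℤ)) R)
    (fun x _ => hψ.hasSubgaussianMGF (hC x)) hε
  rw [card_piFinset_Icc_neg, Real.coe_toNNReal v hv] at this
  simp only [box_natCast_eq_piFinset, Finset.mem_coe]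
  exact_mod_cast this

end Concentration

theorem phi_close_to_truncation_general (d : ℕ) (hd : 3 ≤ d) :
    ∃ c C : ℝ, 0 < c ∧ 0 < C ∧
      ∀ {Ω : Type*} [MeasurableSpace Ω] (P : Measure Ω), IsProbabilityMeasure P →
        ∀ (ψ : V d → Ω → ℝ) (L : ℕ), IsCGF P ψ (covTail d L) →
          ∀ ε : ℝ, 0 < ε → ∀ R : ℕ, 1 ≤ L → 1 ≤ R →
            ENNReal.ofReal
                (1 - C * (R : ℝ) ^ d *
                  Real.exp (-c * ε ^ 2 * (L : ℝ) ^ (((d : ℝ) - 2) / 2))) ≤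
              P {ω | ∀ x ∈ box d (R : ℝ), |ψ x ω| < ε} := by
  have d_sub_two_pos : (0 : ℝ) < d - 2 := sub_pos.2 (by exact_mod_cast hd)
  set K : ℝ := √(Real.pi * d / 4) ^ d / (d - 2)
  have K_pos : 0 < K := by have := Real.pi_pos; positivity
  refine ⟨1 / (2 * K), 2 * 3 ^ d, by positivity, by positivity, ?_⟩
  intro Ω _ P _ ψ L hψ ε hε R hL hR
  have L_pos : (0 : ℝ) < L := by exact_mod_cast hL
  have one_le_R : (1 : ℝ) ≤ R := by exact_mod_cast hR
  have exponent_eq : -ε ^ 2 / (2 * (K * (L : ℝ) ^ (-(((d : ℝ) - 2) / 2)))) =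
      -(1 / (2 * K)) * ε ^ 2 * (L : ℝ) ^ (((d : ℝ) - 2) / 2) := by
    rw [Real.rpow_neg L_pos.le]
    field_simp
  refine ENNReal.ofReal_le_of_le_toReal <| le_trans ?_ <|
    hψ.one_sub_le_measureReal_forall_box_abs_lt (by positivity)
      (fun x => covTail_le hd (by omega) x x) hε.le R
  rw [exponent_eq, mul_assoc 2, ← mul_pow]
  gcongr
  linarith

/-- Lemma 3.2: uniform closeness of `φ` and `φ^L` on a box. -/
theorem phi_close_to_truncation (d : ℕ) (hd : 3 ≤ d) :
    ∃ c C : ℝ, 0 < c ∧ 0 < C ∧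
      ∀ {Ω : Type} [MeasurableSpace Ω] (P : Measure Ω), IsProbabilityMeasure P →
        ∀ (φ : V d → Ω → ℝ) (φL : ℕ → V d → Ω → ℝ),
          IsGFF P φ → IsTruncCoupling d P φ φL →
          ∀ ε : ℝ, 0 < ε → ∀ L R : ℕ, 1 ≤ L → 1 ≤ R →
            ENNReal.ofReal
                (1 - C * (R : ℝ) ^ d *
                  Real.exp (-c * ε ^ 2 * (L : ℝ) ^ (((d : ℝ) - 2) / 2))) ≤
              P {ω | ∀ x ∈ box d (R : ℝ), |φ x ω - φL L x ω| < ε} := by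
  obtain ⟨c, C, hc, hC, tail_field_small⟩ := phi_close_to_truncation_general d hd
  exact ⟨c, C, hc, hC, fun P hP φ φL _ coupling ε hε L R =>
    tail_field_small P hP (fun x ω => φ x ω - φL L x ω) L (coupling L).2.1 ε hε R⟩

end
end GFFperc
end
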